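/- arXiv:2507.09707 — 3 statements merged into one kernel-verified Lean document; each statement's English description precedes it below -/
import Mathlib

section
/- Let H and E be finite-dimensional Euclidean spaces, X ⊂ H and K ⊂ E compact subsets containing the origins, and S: H × E → H a C²-smooth map with S(0,0) = 0 and S(X × K) ⊂ X. Assume: (Dissipativity) for every ε > 0 there is an integer n_ε ≥ 1 such that |S_{n_ε}(u; 0, …, 0)| ≤ ε for all u ∈ X, where S_n(u; ζ_1, …, ζ_n) denotes the trajectory of u_k = S(u_{k−1}, ζ_k), u_0 = u; (Controllability) the map D_η S(0,0): E → H is surjective and D_u S(0,0): H → H is an isomorphism. Let {η_k} be a Markov process in E with a Feller continuous time-1 transition probability Q(y;·) such that supp D(η_0) ⊂ K and supp Q(y;·) ⊂ K for all y ∈ K, and assume: (Minorisation) there exist r > 0 and a bounded continuous function ρ: B̄_E(r) × E → ℝ₊ with ρ(0,0) > 0 such that Q(y; dz) ≥ ρ(y,z) ℓ(dz) for all y ∈ K ∩ B̄_E(r), where ℓ is the Lebesgue measure on E; (Strong recurrence) for every δ > 0 there exist an integer l ≥ 1 and κ > 0 such that Q_l(y; B_E(0, δ)) ≥ κ for all y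 ∈ K, where Q_k is the time-k transition probability. Then there exist a translation-invariant measure 𝛍 on X^ℤ and a number γ > 0 such that for every integer m ≥ 0 there is C_m > 0 such that for every initial state u ∈ X the trajectory {u_k} of the RDS u_k = S(u_{k−1}, η_k), u_0 = u, satisfies ‖D([u_k, …, u_{k+m}]) − 𝛍_m‖_var ≤ C_m e^{−γ k} for all k ≥ 0, where 𝛍_m is the projection of 𝛍 to X^{m+1}. -/
open MeasureTheory ProbabilityTheory Set Metric

/-- The trajectory of the system `u_k = S(u_{k-1}, ζ_k)` issued from `u₀` (with noise inputs
`ζ 1, ζ 2, …`). -/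
def traj {H E : Type*} (S : H × E → H) (u₀ : H) (ζ : ℕ → E) : ℕ → H
  | 0 => u₀
  | k + 1 => S (traj S u₀ ζ k, ζ (k + 1))

/-- The time-`l` transition probability obtained by iterating the time-1 transition kernel. -/
noncomputable def kiter {E : Type*} [MeasurableSpace E] (Q : Kernel E E) : ℕ → Kernel E E
  | 0 => Kernel.id
  | l + 1 => (kiter Q l) ∘ₖ Q

/-- The sequence `ζ` is a homogeneous Markov process on the filtered probability space
`(Ω, ℱ, P)` with time-1 transition probability (kernel) `Q`. -/
def IsMarkovWrt {Ω K : Type*} {mΩ : MeasurableSpace Ω} [MeasurableSpace K]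
    (P : Measure Ω) (ℱ : Filtration ℕ mΩ) (ζ : ℕ → Ω → K) (Q : Kernel K K) : Prop :=
  (∀ k, Measurable[ℱ k] (ζ k)) ∧
  ∀ (k : ℕ) (A : Set K), MeasurableSet A →
    (fun ω => ((Q (ζ k ω)) A).toReal)
      =ᵐ[P] P[fun ω => A.indicator (fun _ => (1 : ℝ)) (ζ (k + 1) ω)|ℱ k]


open Filter Topology
open scoped ENNReal NNReal

lemma image_lower {F E H : Type*} [NormedAddCommGroup F] [NormedSpace ℝ F]
    [NormedAddCommGroup E] [NormedSpace ℝ E] [FiniteDimensional ℝ E]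
    [NormedAddCommGroup H] [NormedSpace ℝ H] [FiniteDimensional ℝ H]
    [MeasurableSpace E] [BorelSpace E] (vol : Measure E) [vol.IsAddHaarMeasure]
    (G : F × E → H) (G' : F × E →L[ℝ] H) (hG : HasStrictFDerivAt G G' (0, 0))
    (h0 : G (0, 0) = 0)
    (hsurj : Function.Surjective (G'.comp (ContinuousLinearMap.inr ℝ F E)))
    (δ : ℝ) (hδ : 0 < δ) :
    ∃ δ' > 0, ∀ᶠ p in 𝓝 (0 : F), ∀ A : Set H,
      vol (ball 0 δ' ∩ (G'.comp (ContinuousLinearMap.inr ℝ F E)) ⁻¹' A)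
        ≤ 2 * vol {z | z ∈ ball (0 : E) δ ∧ G (p, z) ∈ A} := by
  set L : E →L[ℝ] H := G'.comp (ContinuousLinearMap.inr ℝ F E) with hL
  obtain ⟨R0, hR0⟩ := (L : E →ₗ[ℝ] H).exists_rightInverse_of_surjective
    (LinearMap.range_eq_top.2 hsurj)
  let R : H →L[ℝ] E := LinearMap.toContinuousLinearMap R0
  have hR : ∀ x, L (R x) = x := fun x => by
    have := LinearMap.congr_fun hR0 x
    exact this
  have hev := addHaar_image_le_mul_of_det_lt vol (ContinuousLinearMap.id ℝ E) (m := 2)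
    (by simp [ContinuousLinearMap.det])
  have hev2 : ∀ᶠ ε in 𝓝[>] (0 : ℝ≥0), ε < 1 / 2 :=
    nhdsWithin_le_nhds (Iio_mem_nhds (by norm_num))
  obtain ⟨ε, ⟨hε1, hε2⟩, hε0⟩ := ((hev.and hev2).and self_mem_nhdsWithin).exists
  have hε0 : 0 < ε := hε0
  set c : ℝ≥0 := ε / (‖R‖₊ + 1) with hc
  have hc0 : 0 < c := by positivity
  have hRc : ‖R‖ * c ≤ ε := by
    have : ‖R‖₊ * c ≤ ε := by
      rw [hc, mul_div_assoc']
      apply div_le_of_le_mul₀ <;> try positivity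
      rw [mul_comm]; gcongr; simp
    exact_mod_cast this
  obtain ⟨s, hs, happ⟩ := hG.approximates_deriv_on_nhds (c := c) (Or.inr hc0)
  obtain ⟨a, ha, has⟩ := Metric.mem_nhds_iff.1 hs
  set b := min a δ / 2 with hb
  have hmin : 0 < min a δ := lt_min ha hδ
  have hb0 : 0 < b := by positivity
  have hba : b < a := by have := min_le_left a δ; linarith
  have hbδ : b < δ := by have := min_le_right a δ; linarith
  refine ⟨b / 4, by positivity, ?_⟩
  let Φ : F → E → E := fun p z => z + R (G (p, z) - L z)
  have hcont : Tendsto (fun p : F => ‖Φ p 0‖) (𝓝 0) (𝓝 0) := by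
    have h1 : ContinuousAt G (0, 0) := hG.hasFDerivAt.continuousAt
    have h2 : ContinuousAt (fun p : F => G (p, (0 : E))) 0 :=
      ContinuousAt.comp (f := fun p : F => (p, (0 : E))) h1
        (Continuous.continuousAt (by fun_prop))
    have h3 : ContinuousAt (fun p : F => ‖Φ p 0‖) 0 := by
      simp only [Φ, map_zero, sub_zero, zero_add]
      exact (R.continuous.continuousAt.comp h2).norm
    have := h3.tendsto
    simpa [Φ, h0] using this
  filter_upwards [hcont (Iio_mem_nhds (show (0 : ℝ) < b / 4 by positivity)),
    ball_mem_nhds (0 : F) ha] with p hp1 hp2 A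
  have hp1 : ‖Φ p 0‖ < b / 4 := hp1
  have happΦ : ApproximatesLinearOn (Φ p) (ContinuousLinearMap.id ℝ E) (closedBall 0 b) ε := by
    intro x hx y hy
    have hmem : ∀ z ∈ closedBall (0 : E) b, (p, z) ∈ s := by
      intro z hz
      apply has
      rw [mem_ball, Prod.dist_eq]
      exact max_lt hp2 (lt_of_le_of_lt hz hba)
    have h := happ _ (hmem x hx) _ (hmem y hy)
    have hid : Φ p x - Φ p y - (ContinuousLinearMap.id ℝ E) (x - y)
        = R (G (p, x) - G (p, y) - G' ((p, x) - (p, y))) := by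
      have : G' ((p, x) - (p, y)) = L x - L y := by
        rw [← map_sub, hL]; simp
      rw [this]
      simp only [Φ, map_sub, ContinuousLinearMap.id_apply]
      abel
    rw [hid]
    calc _ ≤ ‖R‖ * (c * ‖(p, x) - (p, y)‖) := (R.le_opNorm _).trans (by gcongr)
      _ = ‖R‖ * c * ‖x - y‖ := by
        simp [Prod.norm_def, mul_assoc]
      _ ≤ _ := by gcongr
  let inv : (ContinuousLinearMap.id ℝ E).NonlinearRightInverse :=
    ⟨id, 1, by intro y; simp, by intro y; simp⟩
  have hsur := happΦ.surjOn_closedBall_of_nonlinearRightInverse inv hb0.le subset_rfl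
  have hLΦ : ∀ z, L (Φ p z) = G (p, z) := by
    intro z; simp [Φ, hR]
  set T : Set E := {z | z ∈ closedBall (0 : E) b ∧ G (p, z) ∈ A} with hT
  have hsub : ball 0 (b / 4) ∩ L ⁻¹' A ⊆ Φ p '' T := by
    rintro x ⟨hx1, hx2⟩
    have hx : x ∈ closedBall (Φ p 0) (((inv.nnnorm : ℝ)⁻¹ - ε) * b) := by
      have h1 : (ε : ℝ) < 1 / 2 := by exact_mod_cast hε2
      have h2 : ((inv.nnnorm : ℝ)⁻¹ - ε) * b ≥ b / 2 := by
        simp only [inv, NNReal.coe_one, inv_one]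
        nlinarith
      rw [mem_closedBall, dist_eq_norm]
      rw [mem_ball_zero_iff] at hx1
      have := norm_sub_le x (Φ p 0)
      linarith
    obtain ⟨z, hz, rfl⟩ := hsur hx
    refine ⟨z, ⟨hz, ?_⟩, rfl⟩
    rw [← hLΦ]; exact hx2
  calc vol (ball 0 (b / 4) ∩ L ⁻¹' A) ≤ vol (Φ p '' T) := measure_mono hsub
    _ ≤ 2 * vol T := by
      have := hε1 T (Φ p) (happΦ.mono_set (fun z hz => hz.1))
      simpa using this
    _ ≤ _ := by
      gcongr
      rintro z ⟨hz, hz2⟩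
      exact ⟨closedBall_subset_ball hbδ hz, hz2⟩

section Doeblin

variable {Z : Type*} [MeasurableSpace Z]

lemma kiter_add (Q : Kernel Z Z) (a b : ℕ) : kiter Q (a + b) = kiter Q a ∘ₖ kiter Q b := by
  induction b with
  | zero => simp [kiter, Kernel.comp_id]
  | succ b ih => rw [← add_assoc, kiter, ih, kiter, Kernel.comp_assoc]

lemma kiter_mul (Q : Kernel Z Z) (n q : ℕ) : kiter (kiter Q n) q = kiter Q (n * q) := by
  induction q with
  | zero => simp [kiter]
  | succ q ih => rw [kiter, ih, Nat.mul_succ, kiter_add]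

instance kiter_markov (Q : Kernel Z Z) [IsMarkovKernel Q] (n : ℕ) : IsMarkovKernel (kiter Q n) := by
  induction n with
  | zero => rw [kiter]; infer_instance
  | succ n ih => rw [kiter]; infer_instance

lemma doeblin_basic (T : Kernel Z Z) [IsMarkovKernel T] (ν : Measure Z) (hν : ν univ ≠ 0)
    (h : ∀ v, ν ≤ T v) [Nonempty Z] :
    ∃ (π : Measure Z) (θ : ℝ≥0∞), IsProbabilityMeasure π ∧ θ < 1 ∧ π.bind T = π ∧
      ∀ g : Z → ℝ≥0∞, Measurable g → (∀ z, g z ≤ 1) → ∀ q : ℕ, ∃ a : ℝ≥0∞, ∀ v,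
        a ≤ ∫⁻ z, g z ∂(kiter T q v) ∧ ∫⁻ z, g z ∂(kiter T q v) ≤ a + θ ^ q := by
  obtain ⟨v0⟩ := ‹Nonempty Z›
  have hc1 : ν univ ≤ 1 := by simpa using h v0 univ
  have : IsFiniteMeasure ν := ⟨lt_of_le_of_lt hc1 ENNReal.one_lt_top⟩
  set c := ν univ with hc
  have hctop : c ≠ ⊤ := (lt_of_le_of_lt hc1 ENNReal.one_lt_top).ne
  have hRapp : ∀ v (A : Set Z), MeasurableSet A → (T v - ν) A = T v A - ν A := fun v A hA =>
    Measure.sub_apply hA (h v)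
  let R : Kernel Z Z := ⟨fun v => T v - ν, by
    refine Measure.measurable_of_measurable_coe _ fun A hA => ?_
    simp only [hRapp _ A hA]
    exact (T.measurable_coe hA).sub_const _⟩
  have hR : ∀ v, T v = R v + ν := fun v => (Measure.sub_add_cancel_of_le (h v)).symm
  have hRu : ∀ v, R v univ = 1 - c := fun v => by
    change (T v - ν) univ = _
    rw [hRapp v univ MeasurableSet.univ]; simp [hc]
  let m : ℕ → Measure Z := fun k => Nat.rec ν (fun _ μ => μ.bind R) k
  have hm0 : m 0 = ν := rfl
  have hms : ∀ k, m (k + 1) = (m k).bind R := fun k => rfl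
  have hmu : ∀ k, m k univ = (1 - c) ^ k * c := by
    intro k
    induction k with
    | zero => simp [hm0, hc]
    | succ k ih =>
      rw [hms, Measure.bind_apply MeasurableSet.univ R.aemeasurable]
      simp only [hRu, lintegral_const, ih]
      ring
  have hπu : Measure.sum m univ = 1 := by
    rw [Measure.sum_apply _ MeasurableSet.univ]
    simp only [hmu]
    rw [ENNReal.tsum_mul_right, ENNReal.tsum_geometric, ENNReal.sub_sub_cancel (by simp) hc1]
    exact ENNReal.inv_mul_cancel hν hctop
  have hθ : 1 - c < 1 := ENNReal.sub_lt_self (by simp) (by simp) hν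
  refine ⟨Measure.sum m, 1 - c, ⟨hπu⟩, hθ, ?_, ?_⟩
  · ext A hA
    rw [Measure.bind_apply hA T.aemeasurable]
    have : ∀ v, T v A = R v A + ν A := fun v => by rw [hR v]; rfl
    simp only [this]
    rw [lintegral_add_right _ measurable_const, lintegral_const, hπu, mul_one,
      lintegral_sum_measure, Measure.sum_apply _ hA,
      tsum_eq_zero_add' (f := fun i => m i A) ENNReal.summable, hm0, add_comm]
    congr 1
    refine tsum_congr fun k => ?_
    rw [hms, Measure.bind_apply hA R.aemeasurable]
  · intro g hg hg1 q
    induction q with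
    | zero =>
      refine ⟨0, fun v => ⟨zero_le, ?_⟩⟩
      simp [kiter, Kernel.id_apply, lintegral_dirac' _ hg, hg1]
    | succ q ih =>
      obtain ⟨a, ha⟩ := ih
      refine ⟨a * (1 - c) + ∫⁻ w, ∫⁻ z, g z ∂(kiter T q w) ∂ν, fun v => ?_⟩
      rw [kiter, Kernel.lintegral_comp _ _ _ hg, hR v, lintegral_add_measure]
      constructor
      · gcongr
        calc a * (1 - c) = ∫⁻ _, a ∂(R v) := by rw [lintegral_const, hRu]
          _ ≤ _ := lintegral_mono fun w => (ha w).1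
      · rw [add_right_comm]
        gcongr
        calc _ ≤ ∫⁻ _, (a + (1 - c) ^ q) ∂(R v) := lintegral_mono fun w => (ha w).2
          _ = _ := by rw [lintegral_const, hRu]; ring

lemma doeblin (Q : Kernel Z Z) [IsMarkovKernel Q] (n : ℕ) (ν : Measure Z) (hν : ν univ ≠ 0)
    (h : ∀ v, ν ≤ kiter Q n v) [Nonempty Z] :
    ∃ (π : Measure Z) (θ : ℝ≥0∞), IsProbabilityMeasure π ∧ θ < 1 ∧
      ∀ g : Z → ℝ≥0∞, Measurable g → (∀ z, g z ≤ 1) → ∀ k : ℕ, ∃ a : ℝ≥0∞,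
        (a ≤ ∫⁻ z, g z ∂π ∧ ∫⁻ z, g z ∂π ≤ a + θ ^ (k / n)) ∧
        ∀ lam : Measure Z, IsProbabilityMeasure lam →
          a ≤ ∫⁻ z, g z ∂(lam.bind (kiter Q k)) ∧
          ∫⁻ z, g z ∂(lam.bind (kiter Q k)) ≤ a + θ ^ (k / n) := by
  obtain ⟨π, θ, hπ, hθ, hinv, H⟩ := doeblin_basic (kiter Q n) ν hν h
  refine ⟨π, θ, hπ, hθ, fun g hg hg1 k => ?_⟩
  obtain ⟨a, ha⟩ := H g hg hg1 (k / n)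
  have key : ∀ lam : Measure Z, IsProbabilityMeasure lam →
      a ≤ ∫⁻ w, ∫⁻ z, g z ∂(kiter (kiter Q n) (k / n) w) ∂lam ∧
      ∫⁻ w, ∫⁻ z, g z ∂(kiter (kiter Q n) (k / n) w) ∂lam ≤ a + θ ^ (k / n) := by
    intro lam hlam
    constructor
    · calc a = ∫⁻ _, a ∂lam := by simp
        _ ≤ _ := lintegral_mono fun w => (ha w).1
    · calc _ ≤ ∫⁻ _, (a + θ ^ (k / n)) ∂lam := lintegral_mono fun w => (ha w).2
        _ = _ := by simp
  refine ⟨a, ?_, ?_⟩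
  · have hpi : ∀ q, π.bind (kiter (kiter Q n) q) = π := by
      intro q
      induction q with
      | zero => simp [kiter]
      | succ q ih => rw [kiter, ← Measure.comp_assoc, hinv, ih]
    have := key π hπ
    rwa [← Measure.lintegral_bind (Kernel.aemeasurable _) hg.aemeasurable, hpi] at this
  · intro lam hlam
    have hk : kiter Q k = kiter (kiter Q n) (k / n) ∘ₖ kiter Q (k % n) := by
      rw [kiter_mul, ← kiter_add, Nat.div_add_mod]
    have hp : IsProbabilityMeasure (lam.bind (kiter Q (k % n))) := by infer_instance
    have := key _ hp
    rwa [← Measure.lintegral_bind (Kernel.aemeasurable _) hg.aemeasurable,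
      Measure.comp_assoc, ← hk] at this

end Doeblin

lemma two_sided_ext {H : Type*} [MeasurableSpace H] [Nonempty H] (μ ν : Measure (ℤ → H))
    [IsProbabilityMeasure μ] [IsProbabilityMeasure ν]
    (h : ∀ (a : ℤ) (m : ℕ), μ.map (fun f (i : Fin (m + 1)) => f (a + (i : ℕ)))
      = ν.map (fun f (i : Fin (m + 1)) => f (a + (i : ℕ)))) : μ = ν := by
  have key : ∀ I : Finset ℤ, μ.map I.restrict = ν.map I.restrict := by
    intro I
    obtain ⟨N, hN⟩ : ∃ N : ℕ, ∀ i ∈ I, |i| ≤ N := by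
      refine ⟨I.sup Int.natAbs, fun i hi => ?_⟩
      have := Finset.le_sup (f := Int.natAbs) hi
      rw [Int.abs_eq_natAbs]; exact_mod_cast this
    have hw := h (-N) (2 * N)
    let Ψ : (Fin (2 * N + 1) → H) → (I → H) := fun g i =>
      g ⟨((i : ℤ) + N).toNat, by have := abs_le.1 (hN i i.2); omega⟩
    have hΨ : Measurable Ψ := by fun_prop
    have hfac : (I.restrict : (ℤ → H) → (I → H))
        = Ψ ∘ (fun f (i : Fin (2 * N + 1)) => f (-N + (i : ℕ))) := by
      funext f i
      have := abs_le.1 (hN i i.2)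
      simp only [Finset.restrict, Ψ, Function.comp]
      congr 1
      omega
    have hwm : Measurable (fun (f : ℤ → H) (i : Fin (2 * N + 1)) => f (-N + (i : ℕ))) := by
      fun_prop
    rw [hfac, ← Measure.map_map hΨ hwm, hw, Measure.map_map hΨ hwm]
  have hfin : ∀ I : Finset ℤ, IsFiniteMeasure (μ.map (I.restrict : (ℤ → H) → (I → H))) :=
    fun I => inferInstance
  exact IsProjectiveLimit.unique (P := fun I => μ.map I.restrict) (fun I => rfl)
    (fun I => (key I).symm)

lemma two_sided {H Ω : Type*} [NormedAddCommGroup H] [InnerProductSpace ℝ H]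
    [FiniteDimensional ℝ H] [MeasurableSpace H] [BorelSpace H] {mΩ : MeasurableSpace Ω}
    (P : Measure Ω) [IsProbabilityMeasure P] (X : Set H) (hX : IsCompact X)
    (u : ℕ → Ω → H) (hu : ∀ k, Measurable (u k)) (huX : ∀ᵐ ω ∂P, ∀ k, u k ω ∈ X)
    (M : ∀ m : ℕ, Measure (Fin (m + 1) → H)) (hM : ∀ m, IsProbabilityMeasure (M m))
    (hconv : ∀ m (A : Set (Fin (m + 1) → H)), MeasurableSet A →
      Tendsto (fun k : ℕ => P.map (fun ω (i : Fin (m + 1)) => u (k + i) ω) A) atTop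
        (𝓝 (M m A))) :
    ∃ μ : Measure (ℤ → H), IsProbabilityMeasure μ ∧ μ.map (fun f n => f (n + 1)) = μ ∧
      μ {f | ∀ n : ℤ, f n ∈ X} = 1 ∧
      ∀ m : ℕ, μ.map (fun f => fun i : Fin (m + 1) => f (i : ℕ)) = M m := by
  have : SecondCountableTopology H := by
    have := FiniteDimensional.proper ℝ H
    infer_instance
  let path : ℕ → Ω → ℤ → H := fun k ω i => u ((k : ℤ) + i).toNat ω
  have hpath : ∀ k, Measurable (path k) := fun k => measurable_pi_lambda _ fun i => hu _
  have hprob : ∀ k, IsProbabilityMeasure (P.map (path k)) := fun k =>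
    Measure.isProbabilityMeasure_map (hpath k).aemeasurable
  let μs : ℕ → ProbabilityMeasure (ℤ → H) := fun k => ⟨P.map (path k), hprob k⟩
  have hXm : MeasurableSet X := hX.isClosed.measurableSet
  have hcompact : IsCompact (closure (range μs)) := by
    apply isCompact_closure_of_isTightMeasureSet
    rw [isTightMeasureSet_iff_exists_isCompact_measure_compl_le]
    intro ε hε
    refine ⟨Set.pi univ (fun _ => X), isCompact_univ_pi fun _ => hX, ?_⟩
    rintro _ ⟨_, ⟨k, rfl⟩, rfl⟩
    have h0 : P.map (path k) (Set.pi univ (fun _ : ℤ => X))ᶜ = 0 := by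
      rw [Measure.map_apply (hpath k) (MeasurableSet.univ_pi fun _ => hXm).compl]
      refine measure_mono_null ?_ (ae_iff.1 huX)
      intro ω hω hall
      exact hω fun i _ => hall _
    change P.map (path k) _ ≤ ε
    rw [h0]; exact zero_le
  obtain ⟨μ, -, hμ⟩ := hcompact.ultrafilter_le_nhds' ((hyperfilter ℕ : Ultrafilter ℕ).map μs) (by
    rw [Ultrafilter.mem_map]
    exact Filter.univ_mem' fun k => subset_closure ⟨k, rfl⟩)
  have hlim : Tendsto μs (hyperfilter ℕ) (𝓝 μ) := hμ
  have hhyp : ((hyperfilter ℕ : Ultrafilter ℕ) : Filter ℕ) ≤ atTop := by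
    rw [← Nat.cofinite_eq_atTop]; exact hyperfilter_le_cofinite
  have hwin : ∀ (a : ℤ) (m : ℕ),
      (μ : Measure (ℤ → H)).map (fun f (i : Fin (m + 1)) => f (a + (i : ℕ))) = M m := by
    intro a m
    let w : (ℤ → H) → (Fin (m + 1) → H) := fun f i => f (a + (i : ℕ))
    have hw : Continuous w := by fun_prop
    have h1 := ProbabilityMeasure.tendsto_map_of_tendsto_of_continuous μs μ hlim hw
    let Mm : ProbabilityMeasure (Fin (m + 1) → H) := ⟨M m, hM m⟩
    have h2 : Tendsto (fun k => (μs k).map hw.measurable.aemeasurable) atTop (𝓝 Mm) := by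
      apply tendsto_of_forall_isOpen_le_liminf_nat'
      intro G hG
      have hG' := hconv m G hG.measurableSet
      have h3 : Tendsto (fun k => ((μs k).map hw.measurable.aemeasurable :
          Measure (Fin (m + 1) → H)) G) atTop (𝓝 (M m G)) := by
        rw [← tendsto_add_atTop_iff_nat a.natAbs]
        have hsh : Tendsto (fun k : ℕ => ((k + a.natAbs : ℕ) + a).toNat) atTop atTop := by
          refine tendsto_atTop_mono (f := fun k => k) (fun k => ?_) tendsto_id
          omega
        refine (hG'.comp hsh).congr fun k => ?_
        change _ = ((P.map (path (k + a.natAbs))).map w) G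
        rw [Measure.map_map hw.measurable (hpath _)]
        simp only [Function.comp]
        congr 2
        funext ω i
        simp only [path, w, Function.comp]
        congr 1
        omega
      exact h3.liminf_eq.ge
    have h4 := tendsto_nhds_unique h1 (h2.mono_left hhyp)
    have h5 := congrArg (fun q : ProbabilityMeasure (Fin (m + 1) → H) =>
      (q : Measure (Fin (m + 1) → H))) h4
    exact h5
  have hshm : Measurable (fun (f : ℤ → H) (n : ℤ) => f (n + 1)) := by fun_prop
  refine ⟨μ, inferInstance, ?_, ?_, ?_⟩
  · have : IsProbabilityMeasure ((μ : Measure (ℤ → H)).map (fun f n => f (n + 1))) :=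
      Measure.isProbabilityMeasure_map hshm.aemeasurable
    apply two_sided_ext
    intro a m
    rw [hwin a m, Measure.map_map (by fun_prop) hshm, ← hwin (a + 1) m]
    congr 1
    funext f i
    simp only [Function.comp]
    congr 1
    ring
  · have hmeas : MeasurableSet {f : ℤ → H | ∀ n : ℤ, f n ∈ X} := by
      have : {f : ℤ → H | ∀ n : ℤ, f n ∈ X} = Set.pi univ fun _ => X := by ext; simp
      rw [this]; exact MeasurableSet.univ_pi fun _ => hXm
    rw [← prob_compl_eq_zero_iff hmeas]
    have : ∀ᵐ f ∂(μ : Measure (ℤ → H)), ∀ n : ℤ, f n ∈ X := by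
      rw [ae_all_iff]
      intro n
      have hA : MeasurableSet {g : Fin (0 + 1) → H | g 0 ∈ X} :=
        (measurable_pi_apply 0) hXm
      have h1 : M 0 {g : Fin (0 + 1) → H | g 0 ∈ X} = 1 := by
        refine tendsto_nhds_unique (hconv 0 _ hA) ?_
        refine (tendsto_const_nhds (x := (1 : ℝ≥0∞))).congr fun k => ?_
        rw [Measure.map_apply (measurable_pi_lambda _ fun i => hu _) hA]
        symm
        have : ∀ᵐ ω ∂P, ω ∈ (fun ω (i : Fin (0 + 1)) => u (k + i) ω) ⁻¹'
            {g : Fin (0 + 1) → H | g 0 ∈ X} := by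
          filter_upwards [huX] with ω hω
          exact hω _
        exact (mem_ae_iff_prob_eq_one
          ((measurable_pi_lambda _ fun i => hu _) hA)).1 this
      rw [← hwin n 0, Measure.map_apply (by fun_prop) hA] at h1
      have h2 := (prob_compl_eq_zero_iff (μ := (μ : Measure (ℤ → H))) (hA.preimage
        (f := fun (f : ℤ → H) (i : Fin (0 + 1)) => f (n + (i : ℕ))) (by fun_prop))).2 h1
      rw [ae_iff]
      convert h2 using 2
      ext f
      simp
    exact ae_iff.1 this
  · intro m
    rw [← hwin 0 m]
    simp

lemma markov_step {Ω E W : Type*} {mΩ : MeasurableSpace Ω} [MeasurableSpace E]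
    [MeasurableSpace W] (P : Measure Ω) [IsProbabilityMeasure P] (ℱ : Filtration ℕ mΩ)
    (η : ℕ → Ω → E) (Q : Kernel E E) [IsMarkovKernel Q] (hη : IsMarkovWrt P ℱ η Q)
    (k : ℕ) (Y : Ω → W) (hY : Measurable[ℱ k] Y) (φ : W × E → ℝ≥0∞) (hφ : Measurable φ) :
    ∫⁻ ω, φ (Y ω, η (k + 1) ω) ∂P = ∫⁻ ω, ∫⁻ z, φ (Y ω, z) ∂(Q (η k ω)) ∂P := by
  have hYm : Measurable Y := hY.mono (ℱ.le k) le_rfl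
  have hηm : ∀ j, Measurable (η j) := fun j => (hη.1 j).mono (ℱ.le j) le_rfl
  have hmeq : P.map (fun ω => (Y ω, η (k + 1) ω))
      = (P ⊗ₘ (Q.comap (η k) (hηm k))).map (fun p => (Y p.1, p.2)) := by
    have hf1 : Measurable (fun ω => (Y ω, η (k + 1) ω)) := hYm.prodMk (hηm _)
    have hf2 : Measurable (fun p : Ω × E => (Y p.1, p.2)) := by fun_prop
    have : IsProbabilityMeasure (P.map (fun ω => (Y ω, η (k + 1) ω))) :=
      Measure.isProbabilityMeasure_map hf1.aemeasurable
    have : IsProbabilityMeasure ((P ⊗ₘ (Q.comap (η k) (hηm k))).map (fun p => (Y p.1, p.2))) :=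
      Measure.isProbabilityMeasure_map hf2.aemeasurable
    refine ext_of_generate_finite _ generateFrom_prod.symm isPiSystem_prod ?_ (by simp)
    rintro _ ⟨B, hB, A, hA, rfl⟩
    have hB : MeasurableSet B := hB
    have hA : MeasurableSet A := hA
    rw [Measure.map_apply hf1 (hB.prod hA), Measure.map_apply hf2 (hB.prod hA)]
    have hpre1 : (fun ω => (Y ω, η (k + 1) ω)) ⁻¹' B ×ˢ A = η (k + 1) ⁻¹' A ∩ Y ⁻¹' B := by
      ext ω; simp [and_comm]
    have hpre2 : (fun p : Ω × E => (Y p.1, p.2)) ⁻¹' B ×ˢ A = (Y ⁻¹' B) ×ˢ A := by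
      ext ω; simp
    rw [hpre1, hpre2, Measure.compProd_apply_prod (hYm hB) hA]
    simp only [Kernel.comap_apply]
    have hintg : Integrable (fun ω => A.indicator (fun _ => (1 : ℝ)) (η (k + 1) ω)) P := by
      have : Measurable (fun ω => A.indicator (fun _ => (1 : ℝ)) (η (k + 1) ω)) :=
        (measurable_const.indicator hA).comp (hηm _)
      refine Integrable.of_bound this.aestronglyMeasurable 1 (ae_of_all _ fun ω => ?_)
      by_cases h : η (k + 1) ω ∈ A <;> simp [h]
    have h1 := setIntegral_condExp (ℱ.le k) hintg (hY hB)
    have h2 : ∫ ω in Y ⁻¹' B, ((Q (η k ω)) A).toReal ∂P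
        = ∫ ω in Y ⁻¹' B, A.indicator (fun _ => (1 : ℝ)) (η (k + 1) ω) ∂P := by
      rw [← h1]
      exact integral_congr_ae (ae_restrict_of_ae (hη.2 k A hA))
    have h3 : ∫ ω in Y ⁻¹' B, A.indicator (fun _ => (1 : ℝ)) (η (k + 1) ω) ∂P
        = (P (η (k + 1) ⁻¹' A ∩ Y ⁻¹' B)).toReal := by
      have : (fun ω => A.indicator (fun _ => (1 : ℝ)) (η (k + 1) ω))
          = (η (k + 1) ⁻¹' A).indicator (fun _ => (1 : ℝ)) := by
        funext ω; rfl
      rw [this, integral_indicator (hηm _ hA), setIntegral_const,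
        measureReal_restrict_apply (hηm _ hA)]
      simp [Measure.real, Measure.restrict_apply (hηm (k + 1) hA)]
    have hQm : Measurable (fun ω => Q (η k ω) A) := (Q.measurable_coe hA).comp (hηm k)
    rw [h3, integral_toReal hQm.aemeasurable
      (ae_of_all _ fun ω => measure_lt_top _ _)] at h2
    refine ((ENNReal.toReal_eq_toReal_iff' ?_ (measure_ne_top _ _)).1 h2).symm
    refine ((lintegral_mono fun ω => (prob_le_one : Q (η k ω) A ≤ 1)).trans_lt ?_).ne
    simp
  rw [← lintegral_map hφ (hYm.prodMk (hηm _)), hmeq, lintegral_map hφ (by fun_prop),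
    Measure.lintegral_compProd (by fun_prop)]
  rfl

section PairKernel

variable {H E : Type*} [MeasurableSpace H] [MeasurableSpace E]

/-- Kernel of the pair process `(u_k, η_k)` precomposed with a retraction `r`. -/
noncomputable def pairK (S : H × E → H) (hS : Measurable S) (Q : Kernel E E)
    (r : H × E → H × E) (hr : Measurable r) : Kernel (H × E) (H × E) :=
  ((Kernel.id ×ₖ (Q.comap Prod.snd measurable_snd)).map
    (fun p : (H × E) × E => (S (p.1.1, p.2), p.2))).comap r hr

instance pairK_markov (S : H × E → H) (hS : Measurable S) (Q : Kernel E E) [IsMarkovKernel Q]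
    (r : H × E → H × E) (hr : Measurable r) : IsMarkovKernel (pairK S hS Q r hr) := by
  unfold pairK
  have : IsMarkovKernel ((Kernel.id ×ₖ (Q.comap Prod.snd measurable_snd)).map
    (fun p : (H × E) × E => (S (p.1.1, p.2), p.2))) :=
    Kernel.IsMarkovKernel.map _ (by fun_prop)
  infer_instance

lemma lintegral_pairK (S : H × E → H) (hS : Measurable S) (Q : Kernel E E) [IsMarkovKernel Q]
    (r : H × E → H × E) (hr : Measurable r) (v : H × E) (g : H × E → ℝ≥0∞) (hg : Measurable g) :
    ∫⁻ w, g w ∂(pairK S hS Q r hr v) = ∫⁻ z, g (S ((r v).1, z), z) ∂(Q (r v).2) := by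
  have hm : Measurable (fun p : (H × E) × E => (S (p.1.1, p.2), p.2)) := by fun_prop
  have hgm : Measurable (fun p : (H × E) × E => g (S (p.1.1, p.2), p.2)) := hg.comp hm
  rw [pairK, Kernel.comap_apply, Kernel.map_apply _ hm, lintegral_map hg hm, Kernel.prod_apply,
    Kernel.id_apply, Measure.dirac_prod, lintegral_map hgm (by fun_prop)]
  rfl

/-- extend a path known up to time `m` by a new value -/
def extPath {Z : Type*} (m : ℕ) (p : (ℕ → Z) × Z) : ℕ → Z := fun i => if i ≤ m then p.1 i else p.2

lemma measurable_extPath {Z : Type*} [MeasurableSpace Z] (m : ℕ) :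
    Measurable (extPath (Z := Z) m) := by
  refine measurable_pi_lambda _ fun i => ?_
  unfold extPath
  by_cases h : i ≤ m <;> simp only [h, if_true, if_false] <;> fun_prop

/-- one step of the path kernel -/
noncomputable def stepK {Z : Type*} [MeasurableSpace Z] (T : Kernel Z Z) (m : ℕ) :
    Kernel (ℕ → Z) (ℕ → Z) :=
  (Kernel.id ×ₖ (T.comap (fun f : ℕ → Z => f m) (measurable_pi_apply m))).map (extPath m)

instance stepK_markov {Z : Type*} [MeasurableSpace Z] (T : Kernel Z Z) [IsMarkovKernel T] (m : ℕ) :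
    IsMarkovKernel (stepK T m) := Kernel.IsMarkovKernel.map _ (measurable_extPath m)

lemma stepK_apply {Z : Type*} [MeasurableSpace Z] (T : Kernel Z Z) [IsMarkovKernel T] (m : ℕ)
    (f : ℕ → Z) (A : Set (ℕ → Z)) (hA : MeasurableSet A) :
    stepK T m f A = ∫⁻ w, A.indicator 1 (extPath m (f, w)) ∂(T (f m)) := by
  have h1 : Measurable (A.indicator (1 : (ℕ → Z) → ℝ≥0∞)) := measurable_one.indicator hA
  have h2 : Measurable (fun a => A.indicator (1 : (ℕ → Z) → ℝ≥0∞) (extPath m a)) :=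
    h1.comp (measurable_extPath m)
  rw [stepK, ← lintegral_indicator_one hA, Kernel.map_apply _ (measurable_extPath m),
    lintegral_map h1 (measurable_extPath m), Kernel.prod_apply, Kernel.id_apply,
    Measure.dirac_prod, lintegral_map h2 (by fun_prop)]
  rfl

/-- law of the path up to time `m` -/
noncomputable def pathK {Z : Type*} [MeasurableSpace Z] (T : Kernel Z Z) : ℕ → Kernel Z (ℕ → Z)
  | 0 => Kernel.deterministic (fun z _ => z) (by fun_prop)
  | m + 1 => stepK T m ∘ₖ pathK T m

instance pathK_markov {Z : Type*} [MeasurableSpace Z] (T : Kernel Z Z) [IsMarkovKernel T] (m : ℕ) :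
    IsMarkovKernel (pathK T m) := by
  induction m with
  | zero => rw [pathK]; infer_instance
  | succ n ih => rw [pathK]; infer_instance

/-- If `v` satisfies the Markov property with kernel `T`, then its path laws are given by `pathK`. -/
lemma path_law {Ω Z : Type*} {mΩ : MeasurableSpace Ω} [MeasurableSpace Z] (P : Measure Ω)
    [IsProbabilityMeasure P] (ℱ : Filtration ℕ mΩ) (T : Kernel Z Z) [IsMarkovKernel T]
    (v : ℕ → Ω → Z) (hv : ∀ k, Measurable[ℱ k] (v k))
    (hstep : ∀ (k : ℕ) (Y : Ω → ℕ → Z), Measurable[ℱ k] Y → ∀ φ : (ℕ → Z) × Z → ℝ≥0∞,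
      Measurable φ → ∫⁻ ω, φ (Y ω, v (k + 1) ω) ∂P = ∫⁻ ω, ∫⁻ w, φ (Y ω, w) ∂(T (v k ω)) ∂P)
    (k m : ℕ) :
    P.map (fun ω i => v (k + min i m) ω) = ((P.map (v 0)).bind (kiter T k)).bind (pathK T m) := by
  have hvm : ∀ k, Measurable (v k) := fun k => (hv k).mono (ℱ.le k) le_rfl
  have hlaw : ∀ k, P.map (v k) = (P.map (v 0)).bind (kiter T k) := by
    intro k
    induction k with
    | zero => simp [kiter]
    | succ k ih =>
      rw [add_comm k 1, kiter_add, ← Measure.comp_assoc, ← ih, add_comm 1 k]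
      have h1 : kiter T 1 = T := by simp [kiter, Kernel.id_comp]
      rw [h1]
      ext A hA
      have hc : Measurable[ℱ k] (fun ω (_ : ℕ) => v k ω) :=
        @measurable_pi_lambda _ _ _ (ℱ k) _ _ fun _ => hv k
      have := hstep k (fun ω _ => v k ω) hc (fun p => A.indicator 1 p.2)
        ((measurable_one.indicator hA).comp measurable_snd)
      rw [Measure.bind_apply hA T.aemeasurable, lintegral_map (T.measurable_coe hA) (hvm k),
        ← lintegral_indicator_one hA, lintegral_map (measurable_one.indicator hA) (hvm _), this]
      simp only [lintegral_indicator_one hA]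
  rw [← hlaw]
  induction m with
  | zero =>
    rw [pathK, Measure.deterministic_comp_eq_map, Measure.map_map (by fun_prop) (hvm k)]
    congr 1
    funext ω i
    simp
  | succ m ih =>
    rw [pathK, ← Measure.comp_assoc, ← ih]
    ext A hA
    have hYm : Measurable[ℱ (k + m)] (fun ω (i : ℕ) => v (k + min i m) ω) :=
      @measurable_pi_lambda _ _ _ (ℱ (k + m)) _ _ fun i =>
        (hv _).mono (ℱ.mono (by omega)) le_rfl
    have h1 : Measurable (A.indicator (1 : (ℕ → Z) → ℝ≥0∞)) := measurable_one.indicator hA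
    have := hstep (k + m) _ hYm (fun p => A.indicator 1 (extPath m p))
      (h1.comp (measurable_extPath m))
    rw [Measure.bind_apply hA (Kernel.aemeasurable _),
      lintegral_map (Kernel.measurable_coe _ hA) (hYm.mono (ℱ.le _) le_rfl)]
    simp only [stepK_apply T m _ A hA, min_self]
    rw [← this, ← lintegral_indicator_one hA, lintegral_map h1
      (measurable_pi_lambda _ fun i => hvm _)]
    refine lintegral_congr fun ω => ?_
    congr 1
    funext i
    simp only [extPath]
    split_ifs with h
    · congr 2; omega
    · congr 1; omega

end PairKernel

section Minor

set_option linter.unusedSectionVars false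

variable {H E : Type*}
    [NormedAddCommGroup H] [InnerProductSpace ℝ H] [FiniteDimensional ℝ H]
    [MeasurableSpace H] [BorelSpace H]
    [NormedAddCommGroup E] [InnerProductSpace ℝ E] [FiniteDimensional ℝ E]
    [MeasureSpace E] [BorelSpace E] [(volume : Measure E).IsAddHaarMeasure]

lemma minor_ball (K : Set E) (Q : Kernel E E)
    (hminor : ∃ r > 0, ∃ ρ : E → E → ℝ,
      (∀ y z, 0 ≤ ρ y z) ∧ (∃ Cb : ℝ, ∀ y z, ρ y z ≤ Cb) ∧
      ContinuousOn (fun p : E × E => ρ p.1 p.2) (closedBall 0 r ×ˢ univ) ∧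
      0 < ρ 0 0 ∧
      ∀ y ∈ K ∩ closedBall 0 r, ∀ A : Set E, MeasurableSet A →
        ∫⁻ z in A, ENNReal.ofReal (ρ y z) ≤ Q y A) :
    ∃ r0 > 0, ∃ c : ℝ≥0∞, c ≠ 0 ∧ ∀ y ∈ K, y ∈ ball (0 : E) r0 →
      c • (volume : Measure E).restrict (ball 0 r0) ≤ Q y := by
  obtain ⟨r, hr, ρ, hρ0, -, hcont, hpos, hQ⟩ := hminor
  have hca : ContinuousAt (fun p : E × E => ρ p.1 p.2) (0, 0) := by
    apply hcont.continuousAt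
    exact prod_mem_nhds (closedBall_mem_nhds _ hr) univ_mem
  have hev : ∀ᶠ p : E × E in 𝓝 (0, 0), ρ 0 0 / 2 < ρ p.1 p.2 :=
    hca.eventually (lt_mem_nhds (by simp only; linarith))
  obtain ⟨a, ha, has⟩ := Metric.eventually_nhds_iff_ball.1 hev
  refine ⟨min a r, lt_min ha hr, ENNReal.ofReal (ρ 0 0 / 2), by simpa using hpos, ?_⟩
  intro y hyK hy
  refine Measure.le_iff.2 fun A hA => ?_
  have hyr : y ∈ closedBall (0 : E) r := ball_subset_closedBall (ball_subset_ball (min_le_right _ _) hy)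
  refine le_trans ?_ (hQ y ⟨hyK, hyr⟩ A hA)
  rw [Measure.smul_apply, smul_eq_mul, Measure.restrict_apply hA]
  calc ENNReal.ofReal (ρ 0 0 / 2) * volume (A ∩ ball 0 (min a r))
      = ∫⁻ z in A ∩ ball 0 (min a r), ENNReal.ofReal (ρ 0 0 / 2) := by
        rw [setLIntegral_const]
    _ ≤ ∫⁻ z in A ∩ ball 0 (min a r), ENNReal.ofReal (ρ y z) := by
        refine setLIntegral_mono' (hA.inter measurableSet_ball) fun z hz => ?_
        apply ENNReal.ofReal_le_ofReal
        refine (has (y, z) ?_).le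
        rw [mem_ball, Prod.dist_eq]
        exact max_lt (ball_subset_ball (min_le_left _ _) hy)
          (ball_subset_ball (min_le_left _ _) hz.2)
    _ ≤ _ := lintegral_mono_set inter_subset_left

variable (X : Set H) (K : Set E) (S : H × E → H) (hSm : Measurable S)
    (Q : Kernel E E) [IsMarkovKernel Q] (r : H × E → H × E) (hr : Measurable r)

lemma kiter_pairK_succ (n : ℕ) (v : H × E) (A : Set (H × E)) (hA : MeasurableSet A) :
    kiter (pairK S hSm Q r hr) (n + 1) v A
      = ∫⁻ z, kiter (pairK S hSm Q r hr) n (S ((r v).1, z), z) A ∂(Q (r v).2) := by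
  rw [kiter, Kernel.comp_apply' _ _ _ hA, lintegral_pairK _ _ _ _ _ _ _ (Kernel.measurable_coe _ hA)]

lemma ae_mem_K (hsuppQ : ∀ y ∈ K, Q y Kᶜ = 0) (y : E) (hy : y ∈ K) : ∀ᵐ z ∂(Q y), z ∈ K :=
  hsuppQ y hy

lemma two_step (hS : ContDiff ℝ 2 S) (hS0 : S (0, 0) = 0)
    (hinv : ∀ u ∈ X, ∀ η ∈ K, S (u, η) ∈ X)
    (hrid : ∀ v : H × E, v.1 ∈ X → v.2 ∈ K → r v = v)
    (hsurj : Function.Surjective ((fderiv ℝ S (0, 0)).comp (ContinuousLinearMap.inr ℝ H E)))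
    (hiso : Function.Bijective ((fderiv ℝ S (0, 0)).comp (ContinuousLinearMap.inl ℝ H E)))
    (hsuppQ : ∀ y ∈ K, Q y Kᶜ = 0) (r0 : ℝ) (hr0 : 0 < r0) (c : ℝ≥0∞) (hc : c ≠ 0)
    (hQ : ∀ y ∈ K, y ∈ ball (0 : E) r0 →
      c • (volume : Measure E).restrict (ball 0 r0) ≤ Q y) :
    ∃ ν : Measure (H × E), ν univ ≠ 0 ∧ ∀ᶠ v in 𝓝 (0 : H × E), v.1 ∈ X → v.2 ∈ K →
      ν ≤ kiter (pairK S hSm Q r hr) 2 v := by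
  set S' := fderiv ℝ S (0, 0) with hS'
  have hd : HasStrictFDerivAt S S' (0, 0) := hS.contDiffAt.hasStrictFDerivAt (by norm_num)
  -- the two-step map, with parameters `(u, z₂)` and variable `z₁`
  let G : (H × E) × E → H := fun q => S (S (q.1.1, q.2), q.1.2)
  let i1 : (H × E) × E →L[ℝ] H × E :=
    ((ContinuousLinearMap.fst ℝ H E).comp (ContinuousLinearMap.fst ℝ (H × E) E)).prod
      (ContinuousLinearMap.snd ℝ (H × E) E)
  let G' : (H × E) × E →L[ℝ] H := S'.comp ((S'.comp i1).prod
    ((ContinuousLinearMap.snd ℝ H E).comp (ContinuousLinearMap.fst ℝ (H × E) E)))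
  have hG : HasStrictFDerivAt G G' (0, 0) := by
    have h1 : HasStrictFDerivAt (fun q : (H × E) × E => S (q.1.1, q.2)) (S'.comp i1) (0, 0) := by
      have : HasStrictFDerivAt S S' (i1 (0, 0)) := by simpa [i1] using hd
      exact this.comp (0, 0) i1.hasStrictFDerivAt
    have h2 : HasStrictFDerivAt (fun q : (H × E) × E => (S (q.1.1, q.2), q.1.2))
        ((S'.comp i1).prod
    ((ContinuousLinearMap.snd ℝ H E).comp (ContinuousLinearMap.fst ℝ (H × E) E))) (0, 0) :=
      h1.prodMk ((ContinuousLinearMap.snd ℝ H E).comp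
        (ContinuousLinearMap.fst ℝ (H × E) E)).hasStrictFDerivAt
    have h3 : HasStrictFDerivAt S S'
        ((fun q : (H × E) × E => (S (q.1.1, q.2), q.1.2)) (0, 0)) := by
      simpa [hS0] using hd
    exact h3.comp (0, 0) h2
  have hG0 : G (0, 0) = 0 := by simp [G, hS0]
  set L := G'.comp (ContinuousLinearMap.inr ℝ (H × E) E) with hL
  have hLs : Function.Surjective L := by
    have : (L : E → H) = (S'.comp (ContinuousLinearMap.inl ℝ H E)) ∘
        (S'.comp (ContinuousLinearMap.inr ℝ H E)) := by
      funext z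
      simp [hL, G', i1]
    rw [this]
    exact hiso.2.comp hsurj
  obtain ⟨δ', hδ', hev⟩ := image_lower (volume : Measure E) G G' hG hG0 hLs r0 hr0
  obtain ⟨a, ha, hva⟩ := Metric.eventually_nhds_iff_ball.1 hev
  set δ2 := min a r0 with hδ2
  have hδ20 : 0 < δ2 := lt_min ha hr0
  let ν0 : Measure (H × E) := (((volume : Measure E).restrict (ball 0 δ')).prod
    ((volume : Measure E).restrict (ball 0 δ2))).map (fun q => (L q.1, q.2))
  have hmL : Measurable (fun q : E × E => (L q.1, q.2)) :=
    (L.measurable.comp measurable_fst).prodMk measurable_snd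
  refine ⟨(c * c / 2) • ν0, ?_, ?_⟩
  · rw [Measure.smul_apply, smul_eq_mul, Measure.map_apply hmL MeasurableSet.univ, preimage_univ,
      ← univ_prod_univ, Measure.prod_prod, Measure.restrict_apply_univ,
      Measure.restrict_apply_univ]
    have h1 := (measure_ball_pos (volume : Measure E) 0 hδ').ne'
    have h2 := (measure_ball_pos (volume : Measure E) 0 hδ20).ne'
    have h3 : c * c / 2 ≠ 0 := by simp [ENNReal.div_eq_zero_iff, hc]
    exact mul_ne_zero h3 (mul_ne_zero h1 h2)
  · filter_upwards [ball_mem_nhds (0 : H × E) hδ20] with v hv hvX hvK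
    have hv1 : v.1 ∈ ball (0 : H) a := by
      rw [mem_ball_zero_iff] at hv ⊢
      exact (norm_fst_le v).trans_lt (hv.trans_le (min_le_left _ _))
    have hv2 : v.2 ∈ ball (0 : E) r0 := by
      rw [mem_ball_zero_iff] at hv ⊢
      exact (norm_snd_le v).trans_lt (hv.trans_le (min_le_right _ _))
    refine Measure.le_iff.2 fun A hA => ?_
    have hSc : Measurable S := hSm
    -- the integrand
    have hind : Measurable (fun q : E × E => A.indicator (1 : H × E → ℝ≥0∞)
        (G ((v.1, q.2), q.1), q.2)) := by
      have : Measurable (fun q : E × E => (G ((v.1, q.2), q.1), q.2)) := by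
        simp only [G]; fun_prop
      exact (measurable_one.indicator hA).comp this
    have hlow : ∀ z1 ∈ K, z1 ∈ ball (0 : E) r0 →
        c * ∫⁻ z2 in ball (0 : E) r0, A.indicator (1 : H × E → ℝ≥0∞) (G ((v.1, z2), z1), z2)
        ≤ kiter (pairK S hSm Q r hr) 1 (S (v.1, z1), z1) A := by
      intro z1 hz1 hz1r
      rw [kiter_pairK_succ S hSm Q r hr 0 _ A hA, hrid _ (hinv _ hvX _ hz1) hz1,
        ← smul_eq_mul, ← lintegral_smul_measure]
      refine lintegral_mono' (hQ z1 hz1 hz1r) fun z2 => ?_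
      rw [kiter, Kernel.id_apply, Measure.dirac_apply' _ hA]
    rw [kiter_pairK_succ S hSm Q r hr 1 _ A hA, hrid v hvX hvK]
    calc ((c * c / 2) • ν0) A
        = c * c / 2 * ∫⁻ z2 in ball (0 : E) δ2,
            volume (ball (0 : E) δ' ∩ L ⁻¹' {x | (x, z2) ∈ A}) := by
          rw [Measure.smul_apply, smul_eq_mul, Measure.map_apply hmL hA,
            Measure.prod_apply_symm (hmL hA)]
          congr 1
          refine lintegral_congr fun z2 => ?_
          rw [Measure.restrict_apply]
          · rw [inter_comm]; rfl
          · exact measurable_prodMk_right (hmL hA)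
      _ ≤ c * c / 2 * ∫⁻ z2 in ball (0 : E) δ2,
            2 * volume {z1 | z1 ∈ ball (0 : E) r0 ∧ G ((v.1, z2), z1) ∈ {x | (x, z2) ∈ A}} := by
          gcongr 1
          refine setLIntegral_mono' measurableSet_ball fun z2 hz2 => ?_
          refine hva (v.1, z2) ?_ _
          rw [← Prod.mk_zero_zero, mem_ball, Prod.dist_eq]
          exact max_lt hv1 (ball_subset_ball (min_le_left _ _) hz2)
      _ = c * c * ∫⁻ z2 in ball (0 : E) δ2, ∫⁻ z1 in ball (0 : E) r0,
            A.indicator (1 : H × E → ℝ≥0∞) (G ((v.1, z2), z1), z2) := by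
          rw [lintegral_const_mul' _ _ (by simp), ← mul_assoc,
            ENNReal.div_mul_cancel (by simp) (by simp)]
          congr 1
          refine lintegral_congr fun z2 => ?_
          have hms : MeasurableSet {z1 | (G ((v.1, z2), z1), z2) ∈ A} := by
            have : Measurable (fun z1 : E => (G ((v.1, z2), z1), z2)) := by
              simp only [G]; fun_prop
            exact this hA
          have : (fun z1 : E => A.indicator (1 : H × E → ℝ≥0∞) (G ((v.1, z2), z1), z2))
              = {z1 | (G ((v.1, z2), z1), z2) ∈ A}.indicator 1 := by
            funext z1; rfl
          rw [this, lintegral_indicator_one hms, Measure.restrict_apply hms, inter_comm]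
          rfl
      _ ≤ c * c * ∫⁻ z2 in ball (0 : E) r0, ∫⁻ z1 in ball (0 : E) r0,
            A.indicator (1 : H × E → ℝ≥0∞) (G ((v.1, z2), z1), z2) := by
          gcongr 1
          exact lintegral_mono_set (ball_subset_ball (min_le_right _ _))
      _ = c * (c * ∫⁻ z1 in ball (0 : E) r0, ∫⁻ z2 in ball (0 : E) r0,
            A.indicator (1 : H × E → ℝ≥0∞) (G ((v.1, z2), z1), z2)) := by
          rw [mul_assoc, lintegral_lintegral_swap]
          exact (hind.comp measurable_swap).aemeasurable
      _ = ∫⁻ z1, (c * ∫⁻ z2 in ball (0 : E) r0,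
            A.indicator (1 : H × E → ℝ≥0∞) (G ((v.1, z2), z1), z2))
            ∂(c • (volume : Measure E).restrict (ball 0 r0)) := by
          rw [lintegral_smul_measure, smul_eq_mul, lintegral_const_mul]
          exact hind.lintegral_prod_right'
      _ ≤ ∫⁻ z1, kiter (pairK S hSm Q r hr) 1 (S (v.1, z1), z1) A
            ∂(c • (volume : Measure E).restrict (ball 0 r0)) := by
          refine lintegral_mono_ae ?_
          have h1 : ∀ᵐ z ∂(c • (volume : Measure E).restrict (ball 0 r0)), z ∈ K :=
            ae_mono (hQ _ hvK hv2) (ae_mem_K K Q hsuppQ _ hvK)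
          have h2 : ∀ᵐ z ∂(c • (volume : Measure E).restrict (ball 0 r0)), z ∈ ball (0 : E) r0 :=
            Measure.ae_smul_measure (ae_restrict_mem measurableSet_ball) c
          filter_upwards [h1, h2] with z h1 h2 using hlow z h1 h2
      _ ≤ _ := lintegral_mono' (hQ _ hvK hv2) le_rfl

lemma good_step (hSc : Continuous S)
    (hinv : ∀ u ∈ X, ∀ η ∈ K, S (u, η) ∈ X)
    (hrid : ∀ v : H × E, v.1 ∈ X → v.2 ∈ K → r v = v)
    (hsuppQ : ∀ y ∈ K, Q y Kᶜ = 0) (r0 : ℝ) (hr0 : 0 < r0) (c : ℝ≥0∞) (hc : c ≠ 0)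
    (hQ : ∀ y ∈ K, y ∈ ball (0 : E) r0 →
      c • (volume : Measure E).restrict (ball 0 r0) ≤ Q y)
    (ν : Measure (H × E)) (M : ℕ) (u : H)
    (hg : ∃ b : ℝ≥0∞, b ≠ 0 ∧ ∀ᶠ v in 𝓝 (S (u, 0), (0 : E)), v.1 ∈ X → v.2 ∈ K →
      b • ν ≤ kiter (pairK S hSm Q r hr) M v) :
    ∃ b : ℝ≥0∞, b ≠ 0 ∧ ∀ᶠ v in 𝓝 (u, (0 : E)), v.1 ∈ X → v.2 ∈ K →
      b • ν ≤ kiter (pairK S hSm Q r hr) (M + 1) v := by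
  obtain ⟨b, hb, hev⟩ := hg
  have hcont : ContinuousAt (fun q : (H × E) × E => (S (q.1.1, q.2), q.2)) ((u, 0), 0) :=
    Continuous.continuousAt (by fun_prop)
  have hev2 := hcont.eventually hev
  rw [nhds_prod_eq] at hev2
  obtain ⟨pa, hpa, pb, hpb, hab⟩ := Filter.eventually_prod_iff.1 hev2
  obtain ⟨a, ha, hva⟩ := Metric.eventually_nhds_iff_ball.1 hpb
  set δ := min a r0 with hδ
  have hδ0 : 0 < δ := lt_min ha hr0
  have hvol := (measure_ball_pos (volume : Measure E) 0 hδ0).ne'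
  refine ⟨b * (c * volume (ball (0 : E) δ)), mul_ne_zero hb (mul_ne_zero hc hvol), ?_⟩
  have hsm : ∀ᶠ v : H × E in 𝓝 (u, (0 : E)), v.2 ∈ ball (0 : E) r0 :=
    continuous_snd.continuousAt.eventually (ball_mem_nhds _ hr0)
  filter_upwards [hpa, hsm] with v hv hv2 hvX hvK
  refine Measure.le_iff.2 fun A hA => ?_
  rw [kiter_pairK_succ S hSm Q r hr M _ A hA, hrid v hvX hvK]
  calc ((b * (c * volume (ball (0 : E) δ))) • ν) A
      = b * ν A * (c * volume (ball (0 : E) δ)) := by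
        rw [Measure.smul_apply, smul_eq_mul]; ring
    _ ≤ b * ν A * Q v.2 (ball 0 δ) := by
        gcongr
        have := hQ v.2 hvK hv2 (ball 0 δ)
        rwa [Measure.smul_apply, smul_eq_mul, Measure.restrict_apply measurableSet_ball,
          inter_eq_left.2 (ball_subset_ball (min_le_right _ _))] at this
    _ = ∫⁻ z in ball 0 δ, b * ν A ∂(Q v.2) := by rw [setLIntegral_const]
    _ ≤ ∫⁻ z in ball 0 δ, kiter (pairK S hSm Q r hr) M (S (v.1, z), z) A ∂(Q v.2) := by
        refine lintegral_mono_ae ?_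
        filter_upwards [ae_restrict_of_ae (ae_mem_K K Q hsuppQ _ hvK),
          ae_restrict_mem measurableSet_ball] with z hzK hz
        have := hab hv (hva z (ball_subset_ball (min_le_left _ _) hz)) (hinv _ hvX _ hzK) hzK A
        rwa [Measure.smul_apply, smul_eq_mul] at this
    _ ≤ _ := setLIntegral_le_lintegral _ _

lemma good_traj (hSc : Continuous S)
    (hinv : ∀ u ∈ X, ∀ η ∈ K, S (u, η) ∈ X)
    (hrid : ∀ v : H × E, v.1 ∈ X → v.2 ∈ K → r v = v)
    (hsuppQ : ∀ y ∈ K, Q y Kᶜ = 0) (r0 : ℝ) (hr0 : 0 < r0) (c : ℝ≥0∞) (hc : c ≠ 0)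
    (hQ : ∀ y ∈ K, y ∈ ball (0 : E) r0 →
      c • (volume : Measure E).restrict (ball 0 r0) ≤ Q y)
    (ν : Measure (H × E)) (u : H) (N : ℕ) : ∀ (M : ℕ),
    (∃ b : ℝ≥0∞, b ≠ 0 ∧ ∀ᶠ v in 𝓝 (traj S u (fun _ => 0) N, (0 : E)), v.1 ∈ X → v.2 ∈ K →
      b • ν ≤ kiter (pairK S hSm Q r hr) M v) →
    ∃ b : ℝ≥0∞, b ≠ 0 ∧ ∀ᶠ v in 𝓝 (u, (0 : E)), v.1 ∈ X → v.2 ∈ K →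
      b • ν ≤ kiter (pairK S hSm Q r hr) (M + N) v := by
  induction N with
  | zero => intro M h; exact h
  | succ N ih =>
    intro M h
    have := ih (M + 1)
      (good_step X K S hSm Q r hr hSc hinv hrid hsuppQ r0 hr0 c hc hQ ν M _ h)
    rwa [add_assoc, add_comm 1 N] at this

lemma good_compact (hX : IsCompact X) (ν : Measure (H × E)) (M : ℕ)
    (hg : ∀ u ∈ X, ∃ b : ℝ≥0∞, b ≠ 0 ∧ ∀ᶠ v in 𝓝 (u, (0 : E)), v.1 ∈ X → v.2 ∈ K →
      b • ν ≤ kiter (pairK S hSm Q r hr) M v) :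
    ∃ b : ℝ≥0∞, b ≠ 0 ∧ ∃ δ > 0, ∀ u ∈ X, ∀ y ∈ K, y ∈ ball (0 : E) δ →
      b • ν ≤ kiter (pairK S hSm Q r hr) M (u, y) := by
  have key : ∃ b : ℝ≥0∞, b ≠ 0 ∧ ∃ δ > 0, ∀ u ∈ X, u ∈ X → ∀ y ∈ K, y ∈ ball (0 : E) δ →
      b • ν ≤ kiter (pairK S hSm Q r hr) M (u, y) := by
    refine hX.induction_on (p := fun s => ∃ b : ℝ≥0∞, b ≠ 0 ∧ ∃ δ > 0, ∀ u ∈ s, u ∈ X →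
      ∀ y ∈ K, y ∈ ball (0 : E) δ → b • ν ≤ kiter (pairK S hSm Q r hr) M (u, y)) ?_ ?_ ?_ ?_
    · exact ⟨1, one_ne_zero, 1, one_pos, by simp⟩
    · rintro s t hst ⟨b, hb, δ, hδ, h⟩
      exact ⟨b, hb, δ, hδ, fun u hu => h u (hst hu)⟩
    · rintro s t ⟨b, hb, δ, hδ, h⟩ ⟨b', hb', δ', hδ', h'⟩
      refine ⟨min b b', ?_, min δ δ', lt_min hδ hδ', ?_⟩
      · exact (lt_min (pos_iff_ne_zero.2 hb) (pos_iff_ne_zero.2 hb')).ne'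
      · rintro u (hu | hu) huX y hyK hy
        · refine le_trans ?_ (h u hu huX y hyK (ball_subset_ball (min_le_left _ _) hy))
          refine Measure.le_iff.2 fun A hA => ?_
          simp only [Measure.smul_apply, smul_eq_mul]
          gcongr; exact min_le_left _ _
        · refine le_trans ?_ (h' u hu huX y hyK (ball_subset_ball (min_le_right _ _) hy))
          refine Measure.le_iff.2 fun A hA => ?_
          simp only [Measure.smul_apply, smul_eq_mul]
          gcongr; exact min_le_right _ _
    · intro u hu
      obtain ⟨b, hb, hev⟩ := hg u hu
      rw [nhds_prod_eq] at hev
      obtain ⟨pa, hpa, pb, hpb, hab⟩ := Filter.eventually_prod_iff.1 hev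
      obtain ⟨a, ha, hva⟩ := Metric.eventually_nhds_iff_ball.1 hpb
      exact ⟨{x | pa x}, nhdsWithin_le_nhds hpa, b, hb, a, ha,
        fun x hx hxX y hyK hy => hab hx (hva y hy) hxX hyK⟩
  obtain ⟨b, hb, δ, hδ, h⟩ := key
  exact ⟨b, hb, δ, hδ, fun u hu => h u hu hu⟩

lemma kiter_pairK_facts
    (hXm : MeasurableSet X) (hKm : MeasurableSet K)
    (hinv : ∀ u ∈ X, ∀ η ∈ K, S (u, η) ∈ X)
    (hrid : ∀ v : H × E, v.1 ∈ X → v.2 ∈ K → r v = v)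
    (hsuppQ : ∀ y ∈ K, Q y Kᶜ = 0) (l : ℕ) : ∀ v : H × E, v.1 ∈ X → v.2 ∈ K →
      (∀ᵐ w ∂(kiter (pairK S hSm Q r hr) l v), w.1 ∈ X ∧ w.2 ∈ K) ∧
      ∀ A : Set E, MeasurableSet A →
        kiter (pairK S hSm Q r hr) l v (Prod.snd ⁻¹' A) = kiter Q l v.2 A := by
  have hms : MeasurableSet {w : H × E | ¬ (w.1 ∈ X ∧ w.2 ∈ K)} :=
    ((measurable_fst hXm).inter (measurable_snd hKm)).compl
  induction l with
  | zero =>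
    intro v hvX hvK
    refine ⟨?_, fun A hA => ?_⟩
    · rw [ae_iff, kiter, Kernel.id_apply, Measure.dirac_apply' _ hms]
      simp [hvX, hvK]
    · rw [kiter, kiter, Kernel.id_apply, Kernel.id_apply,
        Measure.dirac_apply' _ (measurable_snd hA), Measure.dirac_apply' _ hA]
      rfl
  | succ l ih =>
    intro v hvX hvK
    refine ⟨?_, fun A hA => ?_⟩
    · rw [ae_iff, kiter_pairK_succ S hSm Q r hr l _ _ hms, hrid v hvX hvK]
      rw [lintegral_congr_ae (g := fun _ => 0), lintegral_zero]
      filter_upwards [ae_mem_K K Q hsuppQ _ hvK] with z hz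
      exact (ih (S (v.1, z), z) (hinv _ hvX _ hz) hz).1
    · rw [kiter_pairK_succ S hSm Q r hr l _ _ (measurable_snd hA), hrid v hvX hvK, kiter,
        Kernel.comp_apply' _ _ _ hA]
      refine lintegral_congr_ae ?_
      filter_upwards [ae_mem_K K Q hsuppQ _ hvK] with z hz
      exact (ih (S (v.1, z), z) (hinv _ hvX _ hz) hz).2 A hA

lemma pair_doeblin (hX : IsCompact X) (hK : IsCompact K)
    (hS : ContDiff ℝ 2 S) (hS0 : S (0, 0) = 0)
    (hinv : ∀ u ∈ X, ∀ η ∈ K, S (u, η) ∈ X)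
    (hdiss : ∀ ε > 0, ∃ n : ℕ, 1 ≤ n ∧ ∀ u ∈ X, ‖traj S u (fun _ => 0) n‖ ≤ ε)
    (hsurj : Function.Surjective ((fderiv ℝ S (0, 0)).comp (ContinuousLinearMap.inr ℝ H E)))
    (hiso : Function.Bijective ((fderiv ℝ S (0, 0)).comp (ContinuousLinearMap.inl ℝ H E)))
    (hsuppQ : ∀ y ∈ K, Q y Kᶜ = 0)
    (hminor : ∃ r > 0, ∃ ρ : E → E → ℝ,
      (∀ y z, 0 ≤ ρ y z) ∧ (∃ Cb : ℝ, ∀ y z, ρ y z ≤ Cb) ∧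
      ContinuousOn (fun p : E × E => ρ p.1 p.2) (closedBall 0 r ×ˢ univ) ∧
      0 < ρ 0 0 ∧
      ∀ y ∈ K ∩ closedBall 0 r, ∀ A : Set E, MeasurableSet A →
        ∫⁻ z in A, ENNReal.ofReal (ρ y z) ≤ Q y A)
    (hrec : ∀ δ > 0, ∃ l : ℕ, 1 ≤ l ∧ ∃ κ > 0, ∀ y ∈ K,
      ENNReal.ofReal κ ≤ (kiter Q l) y (ball 0 δ))
    (hrmem : ∀ v : H × E, (r v).1 ∈ X ∧ (r v).2 ∈ K)
    (hrid : ∀ v : H × E, v.1 ∈ X → v.2 ∈ K → r v = v) :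
    ∃ (n : ℕ) (ν : Measure (H × E)), 1 ≤ n ∧ ν univ ≠ 0 ∧
      ∀ v, ν ≤ kiter (pairK S hSm Q r hr) n v := by
  obtain ⟨r0, hr0, c, hc, hQ⟩ := minor_ball K Q hminor
  obtain ⟨ν, hν, hev⟩ := two_step X K S hSm Q r hr hS hS0 hinv hrid hsurj hiso hsuppQ r0 hr0 c hc hQ
  obtain ⟨a, ha, hva⟩ := Metric.eventually_nhds_iff_ball.1 (eventually_eventually_nhds.2 hev)
  obtain ⟨N, -, hN⟩ := hdiss (a / 2) (by positivity)
  have hgood : ∀ u ∈ X, ∃ b : ℝ≥0∞, b ≠ 0 ∧ ∀ᶠ v in 𝓝 (u, (0 : E)), v.1 ∈ X → v.2 ∈ K →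
      b • ν ≤ kiter (pairK S hSm Q r hr) (2 + N) v := by
    intro u hu
    refine good_traj X K S hSm Q r hr hS.continuous hinv hrid hsuppQ r0 hr0 c hc hQ ν u N 2
      ⟨1, one_ne_zero, ?_⟩
    have := hva (traj S u (fun _ => 0) N, 0) (by
      rw [mem_ball_zero_iff, Prod.norm_def]
      have := hN u hu
      simp only [norm_zero]
      exact max_lt (by linarith) ha)
    simpa only [one_smul] using this
  obtain ⟨b, hb, δ, hδ, hunif⟩ := good_compact X K S hSm Q r hr hX ν (2 + N) hgood
  obtain ⟨l, hl, κ, hκ, hrecl⟩ := hrec δ hδ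
  have hin : ∀ v : H × E, v.1 ∈ X → v.2 ∈ K →
      (b * ENNReal.ofReal κ) • ν ≤ kiter (pairK S hSm Q r hr) (2 + N + l) v := by
    intro v hvX hvK
    obtain ⟨h1, h2⟩ := kiter_pairK_facts X K S hSm Q r hr hX.measurableSet hK.measurableSet hinv
      hrid hsuppQ l v hvX hvK
    refine Measure.le_iff.2 fun A hA => ?_
    rw [kiter_add, Kernel.comp_apply' _ _ _ hA]
    calc ((b * ENNReal.ofReal κ) • ν) A = b * ν A * ENNReal.ofReal κ := by
          rw [Measure.smul_apply, smul_eq_mul]; ring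
      _ ≤ b * ν A * kiter (pairK S hSm Q r hr) l v (Prod.snd ⁻¹' (ball 0 δ)) := by
          rw [h2 _ measurableSet_ball]
          gcongr
          exact hrecl _ hvK
      _ = ∫⁻ w in Prod.snd ⁻¹' (ball 0 δ), b * ν A ∂(kiter (pairK S hSm Q r hr) l v) := by
          rw [setLIntegral_const]
      _ ≤ ∫⁻ w in Prod.snd ⁻¹' (ball 0 δ), kiter (pairK S hSm Q r hr) (2 + N) w A
            ∂(kiter (pairK S hSm Q r hr) l v) := by
          refine lintegral_mono_ae ?_
          filter_upwards [ae_restrict_of_ae h1,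
            ae_restrict_mem (measurable_snd measurableSet_ball)] with w hw hwb
          have := hunif w.1 hw.1 w.2 hw.2 hwb A
          rwa [Measure.smul_apply, smul_eq_mul] at this
      _ ≤ _ := setLIntegral_le_lintegral _ _
  refine ⟨2 + N + l, (b * ENNReal.ofReal κ) • ν, by omega, ?_, ?_⟩
  · rw [Measure.smul_apply, smul_eq_mul]
    exact mul_ne_zero (mul_ne_zero hb (by simpa using hκ)) hν
  · intro v
    have h := hin (r v) (hrmem v).1 (hrmem v).2
    refine Measure.le_iff.2 fun A hA => (h A).trans ?_
    have : 2 + N + l = (1 + N + l) + 1 := by omega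
    rw [this, kiter_pairK_succ S hSm Q r hr _ _ A hA, kiter_pairK_succ S hSm Q r hr _ v A hA,
      hrid (r v) (hrmem v).1 (hrmem v).2]

end Minor

lemma geom_rate (t : ℝ) (ht0 : 0 < t) (ht1 : t < 1) (n : ℕ) (hn : 1 ≤ n) (k : ℕ) :
    t ^ (k / n) ≤ t⁻¹ * Real.exp (-(-Real.log t / n) * k) := by
  have hnr : (0 : ℝ) < n := by exact_mod_cast hn
  have h1 : Real.exp (-(-Real.log t / n) * k) = t ^ ((k : ℝ) / n) := by
    rw [Real.rpow_def_of_pos ht0]; congr 1; field_simp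
  have h2 : t ^ (((k / n : ℕ) : ℝ) + 1) ≤ t ^ ((k : ℝ) / n) := by
    apply Real.rpow_le_rpow_of_exponent_ge ht0 ht1.le
    rw [div_le_iff₀ hnr]
    have := Nat.lt_mul_div_succ k (by omega : 0 < n)
    have : k ≤ (k / n + 1) * n := by rw [mul_comm]; exact this.le
    exact_mod_cast this
  rw [h1]
  refine le_trans (le_of_eq ?_) (mul_le_mul_of_nonneg_left h2 (by positivity))
  rw [Real.rpow_add ht0, Real.rpow_natCast, Real.rpow_one]
  field_simp

lemma toReal_diff (a x y e : ℝ≥0∞) (hx : x ≠ ⊤) (hy : y ≠ ⊤) (he : e ≠ ⊤)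
    (h1 : a ≤ x) (h2 : x ≤ a + e) (h3 : a ≤ y) (h4 : y ≤ a + e) :
    |x.toReal - y.toReal| ≤ e.toReal := by
  have ha : a ≠ ⊤ := ne_top_of_le_ne_top hx h1
  have hae : a + e ≠ ⊤ := ENNReal.add_ne_top.2 ⟨ha, he⟩
  have e1 := ENNReal.toReal_mono hx h1
  have e2 := ENNReal.toReal_mono hae h2
  have e3 := ENNReal.toReal_mono hy h3
  have e4 := ENNReal.toReal_mono hae h4
  rw [ENNReal.toReal_add ha he] at e2 e4
  rw [abs_le]
  constructor <;> linarith

lemma process_mem {Ω E : Type*} {mΩ : MeasurableSpace Ω} [MeasurableSpace E]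
    (P : Measure Ω) [IsProbabilityMeasure P] (ℱ : Filtration ℕ mΩ)
    (η : ℕ → Ω → E) (Q : Kernel E E) [IsMarkovKernel Q] (hη : IsMarkovWrt P ℱ η Q)
    (K : Set E) (hKm : MeasurableSet K) (hsuppQ : ∀ y ∈ K, Q y Kᶜ = 0)
    (hsupp0 : ∀ᵐ ω ∂P, η 0 ω ∈ K) : ∀ᵐ ω ∂P, ∀ k, η k ω ∈ K := by
  rw [ae_all_iff]
  intro k
  induction k with
  | zero => exact hsupp0
  | succ k ih =>
    have h := markov_step P ℱ η Q hη k (η k) (hη.1 k) (fun p => Kᶜ.indicator 1 p.2)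
      ((measurable_one.indicator hKm.compl).comp measurable_snd)
    have h0 : ∫⁻ ω, ∫⁻ z, Kᶜ.indicator (1 : E → ℝ≥0∞) z ∂(Q (η k ω)) ∂P = 0 := by
      rw [lintegral_congr_ae (g := fun _ => 0), lintegral_zero]
      filter_upwards [ih] with ω hω
      rw [lintegral_indicator_one hKm.compl]
      exact hsuppQ _ hω
    have hηm : Measurable (η (k + 1)) := (hη.1 _).mono (ℱ.le _) le_rfl
    have hi : Measurable (fun ω => Kᶜ.indicator (1 : E → ℝ≥0∞) (η (k + 1) ω)) :=
      (measurable_one.indicator hKm.compl).comp hηm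
    have h2 : ∫⁻ ω, Kᶜ.indicator (1 : E → ℝ≥0∞) (η (k + 1) ω) ∂P = 0 := h.trans h0
    rw [lintegral_eq_zero_iff hi] at h2
    filter_upwards [h2] with ω hω
    by_contra hc
    simp [hc] at hω

lemma traj_adapted {Ω H E : Type*} {mΩ : MeasurableSpace Ω} [MeasurableSpace E]
    [MeasurableSpace H] (ℱ : Filtration ℕ mΩ)
    (η : ℕ → Ω → E) (hη : ∀ k, Measurable[ℱ k] (η k)) (S : H × E → H) (hS : Measurable S)
    (u₀ : H) (k : ℕ) : Measurable[ℱ k] (fun ω => traj S u₀ (fun j => η j ω) k) := by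
  induction k with
  | zero => exact measurable_const
  | succ k ih =>
    exact hS.comp (Measurable.prodMk (ih.mono (ℱ.mono (Nat.le_succ k)) le_rfl) (hη (k + 1)))

lemma traj_mem {H E : Type*} (X : Set H) (K : Set E) (S : H × E → H)
    (hinv : ∀ u ∈ X, ∀ η ∈ K, S (u, η) ∈ X) (u₀ : H) (hu : u₀ ∈ X) (ζ : ℕ → E)
    (hζ : ∀ k, ζ k ∈ K) (k : ℕ) : traj S u₀ ζ k ∈ X := by
  induction k with
  | zero => exact hu
  | succ k ih => exact hinv _ ih _ (hζ _)

lemma process_law {Ω H E : Type*} {mΩ : MeasurableSpace Ω} [MeasurableSpace E]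
    [MeasurableSpace H]
    (P : Measure Ω) [IsProbabilityMeasure P] (ℱ : Filtration ℕ mΩ)
    (η : ℕ → Ω → E) (Q : Kernel E E) [IsMarkovKernel Q] (hη : IsMarkovWrt P ℱ η Q)
    (X : Set H) (K : Set E) (S : H × E → H) (hS : Measurable S)
    (hinv : ∀ u ∈ X, ∀ η ∈ K, S (u, η) ∈ X)
    (r : H × E → H × E) (hr : Measurable r)
    (hrid : ∀ v : H × E, v.1 ∈ X → v.2 ∈ K → r v = v)
    (hK : ∀ᵐ ω ∂P, ∀ k, η k ω ∈ K) (u₀ : H) (hu : u₀ ∈ X) (k m : ℕ) :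
    P.map (fun ω (i : Fin (m + 1)) => traj S u₀ (fun j => η j ω) (k + i))
      = (((P.map (fun ω => (u₀, η 0 ω))).bind (kiter (pairK S hS Q r hr) k)).bind
        (pathK (pairK S hS Q r hr) m)).map (fun f (i : Fin (m + 1)) => (f (i : ℕ)).1) := by
  set v : ℕ → Ω → H × E := fun k ω => (traj S u₀ (fun j => η j ω) k, η k ω) with hv
  have hva : ∀ k, Measurable[ℱ k] (v k) := fun k =>
    Measurable.prodMk (traj_adapted ℱ η hη.1 S hS u₀ k) (hη.1 k)
  have hvm : ∀ k, Measurable (v k) := fun k => (hva k).mono (ℱ.le k) le_rfl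
  have h := path_law P ℱ (pairK S hS Q r hr) v hva ?_ k m
  · have hv0 : v 0 = fun ω => (u₀, η 0 ω) := rfl
    rw [← hv0, ← h, Measure.map_map]
    · congr 1
      funext ω i
      have : min (i : ℕ) m = i := by omega
      simp [hv, this]
    · exact measurable_pi_lambda _ fun i => (measurable_pi_apply _).fst
    · exact measurable_pi_lambda _ fun i => hvm _
  · intro k Y hY φ hφ
    have h1 := markov_step P ℱ η Q hη k (fun ω => (Y ω, v k ω)) (hY.prodMk (hva k))
      (fun p => φ (p.1.1, (S (p.1.2.1, p.2), p.2))) (by fun_prop)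
    refine h1.trans (lintegral_congr_ae ?_)
    filter_upwards [hK] with ω hω
    rw [lintegral_pairK _ _ _ _ _ _ (fun w => φ (Y ω, w)) (by fun_prop),
      hrid (v k ω) (traj_mem X K S hinv u₀ hu _ hω k) (hω k)]

/-- **Theorem 1.1 (exponential mixing in total variation for RDS driven by a Markovian
noise)**.  Let `H`, `E` be finite-dimensional Euclidean spaces, `X ⊂ H`, `K ⊂ E` compact sets
containing the origins, and `S : H × E → H` a `C²`-smooth map with `S(0,0) = 0` and
`S(X × K) ⊂ X` satisfying the Dissipativity and Controllability hypotheses.  Let `η` be a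
Markov process in `E` with a Feller transition probability `Q` whose initial law and transition
measures are supported in `K`, satisfying the Minorisation and Strong recurrence hypotheses.
Then there are a shift-invariant measure `μ` on `X^ℤ` and a number `γ > 0` such that for every
`m ≥ 0` there exists `C_m > 0`, independent of the initial state `u₀ ∈ X`, with
`‖D([u_k, …, u_{k+m}]) − μ_m‖_var ≤ C_m e^{−γ k}` for all `k ≥ 0`. -/
theorem exponential_mixing_markovian_noise
    {H E : Type*}
    [NormedAddCommGroup H] [InnerProductSpace ℝ H] [FiniteDimensional ℝ H]
    [MeasurableSpace H] [BorelSpace H]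
    [NormedAddCommGroup E] [InnerProductSpace ℝ E] [FiniteDimensional ℝ E]
    [MeasureSpace E] [BorelSpace E] [(volume : Measure E).IsAddHaarMeasure]
    (X : Set H) (K : Set E) (hX : IsCompact X) (hK : IsCompact K)
    (h0X : (0 : H) ∈ X) (h0K : (0 : E) ∈ K)
    (S : H × E → H) (hS : ContDiff ℝ 2 S) (hS0 : S (0, 0) = 0)
    (hinv : ∀ u ∈ X, ∀ η ∈ K, S (u, η) ∈ X)
    -- Dissipativity
    (hdiss : ∀ ε > 0, ∃ n : ℕ, 1 ≤ n ∧ ∀ u ∈ X, ‖traj S u (fun _ => 0) n‖ ≤ ε)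
    -- Controllability
    (hsurj : Function.Surjective ((fderiv ℝ S (0, 0)).comp (ContinuousLinearMap.inr ℝ H E)))
    (hiso : Function.Bijective ((fderiv ℝ S (0, 0)).comp (ContinuousLinearMap.inl ℝ H E)))
    -- the Markovian noise
    (Q : Kernel E E) [IsMarkovKernel Q]
    (hFeller : ∀ f : BoundedContinuousFunction E ℝ, Continuous fun y => ∫ z, f z ∂(Q y))
    (hsuppQ : ∀ y ∈ K, Q y Kᶜ = 0)
    -- Minorisation
    (hminor : ∃ r > 0, ∃ ρ : E → E → ℝ,
      (∀ y z, 0 ≤ ρ y z) ∧ (∃ Cb : ℝ, ∀ y z, ρ y z ≤ Cb) ∧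
      ContinuousOn (fun p : E × E => ρ p.1 p.2) (closedBall 0 r ×ˢ univ) ∧
      0 < ρ 0 0 ∧
      ∀ y ∈ K ∩ closedBall 0 r, ∀ A : Set E, MeasurableSet A →
        ∫⁻ z in A, ENNReal.ofReal (ρ y z) ≤ Q y A)
    -- Strong recurrence
    (hrec : ∀ δ > 0, ∃ l : ℕ, 1 ≤ l ∧ ∃ κ > 0, ∀ y ∈ K,
      ENNReal.ofReal κ ≤ (kiter Q l) y (ball 0 δ))
    -- the Markov process η
    {Ω : Type*} {mΩ : MeasurableSpace Ω} (P : Measure Ω) [IsProbabilityMeasure P]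
    (ℱ : Filtration ℕ mΩ)
    (η : ℕ → Ω → E) (hη : IsMarkovWrt P ℱ η Q)
    (hsupp0 : ∀ᵐ ω ∂P, η 0 ω ∈ K) :
    ∃ (μ : Measure (ℤ → H)) (γ : ℝ), IsProbabilityMeasure μ ∧ 0 < γ ∧
      -- μ is a translation-invariant measure on X^ℤ
      μ.map (fun f n => f (n + 1)) = μ ∧ μ {f | ∀ n : ℤ, f n ∈ X} = 1 ∧
      ∀ m : ℕ, ∃ C > 0, ∀ u₀ ∈ X, ∀ k : ℕ,
        ∀ Γ : Set (Fin (m + 1) → H), MeasurableSet Γ →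
          |(P.map (fun ω => fun i : Fin (m + 1) =>
              traj S u₀ (fun j => η j ω) (k + i)) Γ).toReal
            - (μ.map (fun f => fun i : Fin (m + 1) => f (i : ℕ)) Γ).toReal|
          ≤ C * Real.exp (-γ * k) := by
  classical
  have hSc : Continuous S := hS.continuous
  have hSm : Measurable S := hSc.measurable
  have hXm := hX.measurableSet
  have hKm := hK.measurableSet
  let r : H × E → H × E := fun v => if v.1 ∈ X ∧ v.2 ∈ K then v else (0, 0)
  have hr : Measurable r :=
    Measurable.ite ((measurable_fst hXm).inter (measurable_snd hKm)) measurable_id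
      measurable_const
  have hrid : ∀ v : H × E, v.1 ∈ X → v.2 ∈ K → r v = v := fun v h1 h2 => if_pos ⟨h1, h2⟩
  have hrmem : ∀ v : H × E, (r v).1 ∈ X ∧ (r v).2 ∈ K := by
    intro v
    by_cases h : v.1 ∈ X ∧ v.2 ∈ K
    · rw [hrid v h.1 h.2]; exact h
    · have : r v = (0, 0) := if_neg h
      rw [this]; exact ⟨h0X, h0K⟩
  obtain ⟨n, ν, hn, hν, hdoe⟩ := pair_doeblin X K S hSm Q r hr hX hK hS hS0 hinv hdiss hsurj hiso
    hsuppQ hminor hrec hrmem hrid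
  obtain ⟨π, θ, hπ, hθ, hest⟩ := doeblin (pairK S hSm Q r hr) n ν hν hdoe
  have hηK := process_mem P ℱ η Q hη K hKm hsuppQ hsupp0
  have hηm : ∀ k, Measurable (η k) := fun k => (hη.1 k).mono (ℱ.le k) le_rfl
  set T := pairK S hSm Q r hr with hT
  -- the rate
  set t : ℝ := max θ.toReal (1 / 2) with ht
  have ht0 : 0 < t := lt_of_lt_of_le (by norm_num) (le_max_right _ _)
  have hθtop : θ ≠ ⊤ := (hθ.trans ENNReal.one_lt_top).ne
  have ht1 : t < 1 := by
    refine max_lt ?_ (by norm_num)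
    have := (ENNReal.toReal_lt_toReal hθtop ENNReal.one_ne_top).2 hθ
    simpa using this
  set γ : ℝ := -Real.log t / n with hγ
  have hγ0 : 0 < γ := by
    have h1 := Real.log_neg ht0 ht1
    have h2 : (0 : ℝ) < n := by exact_mod_cast hn
    rw [hγ]
    exact div_pos (by linarith) h2
  -- the limiting finite-dimensional laws
  have hΨ : ∀ m : ℕ, Measurable (fun (f : ℕ → H × E) (i : Fin (m + 1)) => (f (i : ℕ)).1) :=
    fun m => measurable_pi_lambda _ fun i => (measurable_pi_apply _).fst
  let M : ∀ m : ℕ, Measure (Fin (m + 1) → H) := fun m =>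
    (π.bind (pathK T m)).map (fun f (i : Fin (m + 1)) => (f (i : ℕ)).1)
  have hM : ∀ m, IsProbabilityMeasure (M m) := fun m =>
    Measure.isProbabilityMeasure_map (hΨ m).aemeasurable
  have hmain : ∀ m : ℕ, ∀ u₀ ∈ X, ∀ k : ℕ,
        ∀ Γ : Set (Fin (m + 1) → H), MeasurableSet Γ →
          |(P.map (fun ω => fun i : Fin (m + 1) =>
              traj S u₀ (fun j => η j ω) (k + i)) Γ).toReal - (M m Γ).toReal|
          ≤ t⁻¹ * Real.exp (-γ * k) := by
    intro m u₀ hu k Γ hΓ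
    have hlam : IsProbabilityMeasure (P.map (fun ω => (u₀, η 0 ω))) :=
      Measure.isProbabilityMeasure_map (measurable_const.prodMk (hηm 0)).aemeasurable
    rw [process_law P ℱ η Q hη X K S hSm hinv r hr hrid hηK u₀ hu k m, ← hT]
    simp only [M]
    have hΓ' := hΨ m hΓ
    rw [Measure.map_apply (hΨ m) hΓ, Measure.map_apply (hΨ m) hΓ,
      Measure.bind_apply hΓ' (Kernel.aemeasurable _), Measure.bind_apply hΓ' (Kernel.aemeasurable _)]
    obtain ⟨a, ⟨ha1, ha2⟩, ha⟩ := hest _ (Kernel.measurable_coe (pathK T m) hΓ')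
      (fun z => prob_le_one) k
    obtain ⟨ha3, ha4⟩ := ha _ hlam
    have hfin : ∀ lam : Measure (H × E), IsProbabilityMeasure lam →
        ∫⁻ z, pathK T m z ((fun (f : ℕ → H × E) (i : Fin (m + 1)) => (f (i : ℕ)).1) ⁻¹' Γ) ∂lam
          ≠ ⊤ := by
      intro lam hlam
      refine ((lintegral_mono fun z => (prob_le_one)).trans_lt ?_ : _ < ⊤).ne
      simp
    refine (toReal_diff a _ _ (θ ^ (k / n)) (hfin _ inferInstance) (hfin _ hπ)
      (ENNReal.pow_ne_top hθtop) ha3 ha4 ha1 ha2).trans ?_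
    rw [ENNReal.toReal_pow]
    exact (pow_le_pow_left₀ ENNReal.toReal_nonneg (le_max_left _ _) _).trans
      (geom_rate t ht0 ht1 n hn k)
  have hum : ∀ k, Measurable (fun ω => traj S 0 (fun j => η j ω) k) := fun k =>
    (traj_adapted ℱ η hη.1 S hSm 0 k).mono (ℱ.le k) le_rfl
  obtain ⟨μ, hμ, hμinv, hμX, hμM⟩ := two_sided P X hX (fun k ω => traj S 0 (fun j => η j ω) k) hum
    (by
      filter_upwards [hηK] with ω hω k
      exact traj_mem X K S hinv 0 h0X _ hω k) M hM (by
      intro m A hA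
      have hp : ∀ k : ℕ, IsProbabilityMeasure (P.map (fun ω (i : Fin (m + 1)) =>
          traj S 0 (fun j => η j ω) (k + i))) := fun k =>
        Measure.isProbabilityMeasure_map (measurable_pi_lambda _ fun i => hum _).aemeasurable
      rw [← ENNReal.tendsto_toReal_iff (fun k => measure_ne_top _ _) (measure_ne_top _ _)]
      rw [tendsto_iff_dist_tendsto_zero]
      refine squeeze_zero (fun _ => dist_nonneg) (fun k => hmain m 0 h0X k A hA) ?_
      have h1 : Tendsto (fun k : ℕ => -γ * (k : ℝ)) atTop atBot :=
        tendsto_natCast_atTop_atTop.const_mul_atTop_of_neg (by linarith)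
      simpa using (Real.tendsto_exp_atBot.comp h1).const_mul t⁻¹)
  refine ⟨μ, γ, hμ, hγ0, hμinv, hμX, fun m => ⟨t⁻¹, by positivity, fun u₀ hu k Γ hΓ => ?_⟩⟩
  rw [hμM m]
  exact hmain m u₀ hu k Γ hΓ
end

section
/- Let H and E be finite-dimensional Euclidean spaces, X ⊂ H and K ⊂ E compact sets containing the origins, and S: H × E → H a C²-smooth map with S(0,0) = 0 and S(X × K) ⊂ X. Assume the map D_η S(0,0): E → H is surjective and D_u S(0,0): H → H is an isomorphism. Let S₂(v; z₁, z₂) = S(S(v, z₁), z₂). Then there exist a subspace F ⊂ E with dim F = dim H, with orthogonal complement F^⊥, and a number α > 0 such that for every (v, z₁⁻, z₂) ∈ B̄_H(α) × B̄_{F^⊥}(α) × B̄_E(α), the C¹-smooth map B_F(α) ∋ z₁⁺ ↦ S₂(v; z₁⁺ + z₁⁻, z₂) ∈ H is a diffeomorphism onto its image, and it can be extended to a global diffeomorphism Φ(·; v, z₁⁻, z₂) from F onto H. -/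
open Set Metric

theorem aux_global {F H : Type*} [NormedAddCommGroup F] [NormedSpace ℝ F] [CompleteSpace F]
    [NormedAddCommGroup H] [NormedSpace ℝ H] [FiniteDimensional ℝ F]
    (L : F ≃L[ℝ] H) (Φ : F → H) (hΦ : ContDiff ℝ 1 Φ) (K : NNReal)
    (hK : Subsingleton F ∨ K < ‖(L.symm : H →L[ℝ] F)‖₊⁻¹)
    (happ : ApproximatesLinearOn Φ (L : F →L[ℝ] H) univ K) :
    ∃ Ψ : H → F, ContDiff ℝ 1 Ψ ∧ Function.LeftInverse Ψ Φ ∧ Function.RightInverse Ψ Φ := by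
  set e := happ.toHomeomorph Φ hK with he
  have hee : ∀ x, e x = Φ x := fun x => rfl
  have hinj : ∀ a, Function.Injective (fderiv ℝ Φ a) := by
    intro a
    rw [injective_iff_map_eq_zero]
    intro x hx
    rcases hK with h | h
    · exact Subsingleton.elim _ _
    · have hd : HasFDerivAt Φ (fderiv ℝ Φ a) a :=
        (hΦ.differentiable one_ne_zero a).hasFDerivAt
      have hb : ‖fderiv ℝ Φ a - (L : F →L[ℝ] H)‖ ≤ K := by
        have hd2 : HasFDerivAt (fun y => Φ y - L y) (fderiv ℝ Φ a - (L : F →L[ℝ] H)) a :=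
          hd.sub (L : F →L[ℝ] H).hasFDerivAt
        have hlip : LipschitzWith K (fun y => Φ y - L y) := by
          refine LipschitzWith.of_dist_le_mul fun y z => ?_
          have := happ y (mem_univ _) z (mem_univ _)
          rw [dist_eq_norm, dist_eq_norm]
          have e1 : (Φ y - L y) - (Φ z - L z) = Φ y - Φ z - (L : F →L[ℝ] H) (y - z) := by
            rw [map_sub]
            simp only [ContinuousLinearEquiv.coe_coe]
            abel
          rw [e1]
          exact this
        exact hd2.le_of_lipschitz hlip
      have h1 : ‖L x‖ ≤ K * ‖x‖ := by
        have := (fderiv ℝ Φ a - (L : F →L[ℝ] H)).le_of_opNorm_le hb x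
        simpa [hx] using this
      have h2 : ‖x‖ ≤ ‖(L.symm : H →L[ℝ] F)‖ * ‖L x‖ := by
        simpa using (L.symm : H →L[ℝ] F).le_opNorm (L x)
      have hN : (0:NNReal) < ‖(L.symm : H →L[ℝ] F)‖₊ := by
        by_contra hc
        have : ‖(L.symm : H →L[ℝ] F)‖₊ = 0 := le_antisymm (not_lt.1 hc) (zero_le)
        rw [this] at h
        simp at h
      have h3 : K * ‖(L.symm : H →L[ℝ] F)‖₊ < 1 := by
        rwa [← NNReal.lt_inv_iff_mul_lt hN.ne'] 
      have h4 : (K:ℝ) * ‖(L.symm : H →L[ℝ] F)‖ < 1 := by exact_mod_cast h3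
      by_contra hx0
      have hxp : 0 < ‖x‖ := norm_pos_iff.2 hx0
      have : ‖x‖ ≤ (K * ‖(L.symm : H →L[ℝ] F)‖) * ‖x‖ := by
        calc _ ≤ _ := h2
          _ ≤ ‖(L.symm : H →L[ℝ] F)‖ * (K * ‖x‖) := by gcongr
          _ = _ := by ring
      nlinarith
  haveI : FiniteDimensional ℝ H := L.toLinearEquiv.finiteDimensional
  have hfr : Module.finrank ℝ F = Module.finrank ℝ H := L.toLinearEquiv.finrank_eq
  let f' : F → F ≃L[ℝ] H := fun a =>
    (LinearEquiv.ofInjectiveOfFinrankEq (fderiv ℝ Φ a : F →ₗ[ℝ] H) (hinj a)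
      hfr).toContinuousLinearEquiv
  have hf' : ∀ a, HasFDerivAt e (f' a : F →L[ℝ] H) a := by
    intro a
    have hd : HasFDerivAt Φ (fderiv ℝ Φ a) a :=
      (hΦ.differentiable one_ne_zero a).hasFDerivAt
    have : (f' a : F →L[ℝ] H) = fderiv ℝ Φ a := by
      ext x
      rfl
    rw [this]
    exact hd
  refine ⟨e.symm, e.contDiff_symm hf' hΦ, fun x => e.symm_apply_apply x,
    fun y => e.apply_symm_apply y⟩

theorem aux_bump (F : Type*) [NormedAddCommGroup F] [InnerProductSpace ℝ F]
    [FiniteDimensional ℝ F] :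
    ∃ M : ℝ, 0 ≤ M ∧ ∀ α : ℝ, 0 < α → ∃ χ : F → ℝ, ContDiff ℝ 1 χ ∧
      (∀ x, ‖x‖ < α → χ x = 1) ∧ (∀ x, 2 * α ≤ ‖x‖ → χ x = 0) ∧ (∀ x, |χ x| ≤ 1) ∧
      ∀ x y, |χ x - χ y| ≤ M / α * ‖x - y‖ := by
  let f : ContDiffBump (0 : F) := ⟨1, 2, one_pos, one_lt_two⟩
  have hf : ContDiff ℝ 1 f := f.contDiff
  obtain ⟨M, hM⟩ := hf.lipschitzWith_of_hasCompactSupport f.hasCompactSupport one_ne_zero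
  refine ⟨M, M.2, fun α hα => ⟨fun x => f (α⁻¹ • x), ?_, ?_, ?_, ?_, ?_⟩⟩
  · exact hf.comp (contDiff_const_smul _)
  · intro x hx
    apply f.one_of_mem_closedBall
    simp only [mem_closedBall, dist_zero_right, norm_smul, norm_inv, Real.norm_eq_abs,
      abs_of_pos hα]
    rw [inv_mul_le_iff₀ hα]
    show ‖x‖ ≤ α * 1
    linarith
  · intro x hx
    apply f.zero_of_le_dist
    simp only [dist_zero_right, norm_smul, norm_inv, Real.norm_eq_abs,
      abs_of_pos hα]
    rw [le_inv_mul_iff₀ hα]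
    show α * 2 ≤ _
    linarith
  · intro x
    rw [abs_of_nonneg f.nonneg]
    exact f.le_one
  · intro x y
    have := hM.dist_le_mul (α⁻¹ • x) (α⁻¹ • y)
    rw [Real.dist_eq, dist_eq_norm, ← smul_sub, norm_smul, norm_inv, Real.norm_eq_abs,
      abs_of_pos hα] at this
    calc _ ≤ _ := this
      _ = _ := by ring

theorem aux_ext {W F H : Type*} [NormedAddCommGroup W] [NormedSpace ℝ W]
    [NormedAddCommGroup F] [InnerProductSpace ℝ F] [FiniteDimensional ℝ F]
    [NormedAddCommGroup H] [NormedSpace ℝ H]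
    (g : W × F → H) (hg : ContDiff ℝ 1 g) (L : F ≃L[ℝ] H)
    (hL : ∀ x, fderiv ℝ g 0 (0, x) = L x) :
    ∃ α : ℝ, 0 < α ∧ ∀ w : W, ‖w‖ ≤ α →
      ∃ (Φ : F → H) (Ψ : H → F), ContDiff ℝ 1 Φ ∧ ContDiff ℝ 1 Ψ ∧
          Function.LeftInverse Ψ Φ ∧ Function.RightInverse Ψ Φ ∧
          ∀ z : F, ‖z‖ < α → Φ z = g (w, z) := by
  obtain ⟨M, hM0, hM⟩ := aux_bump F
  obtain ⟨K, hK0, hK⟩ : ∃ K : NNReal, 0 < K ∧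
      (Subsingleton F ∨ K < ‖(L.symm : H →L[ℝ] F)‖₊⁻¹) := by
    rcases subsingleton_or_nontrivial F with h | h
    · exact ⟨1, one_pos, Or.inl h⟩
    · have : 0 < ‖(L.symm : H →L[ℝ] F)‖₊⁻¹ := by
        rw [inv_pos]
        exact L.nnnorm_symm_pos
      obtain ⟨K, h1, h2⟩ := exists_between this
      exact ⟨K, h1, Or.inr h2⟩
  have hM1 : 0 < 1 + 2 * M := by linarith
  obtain ⟨c, hc0, hc⟩ : ∃ c : ℝ, 0 < c ∧ c * (1 + 2 * M) = K :=
    ⟨K / (1 + 2 * M), div_pos (by exact_mod_cast hK0) hM1, by field_simp⟩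
  have hs : HasStrictFDerivAt g (fderiv ℝ g 0) 0 :=
    hg.contDiffAt.hasStrictFDerivAt one_ne_zero
  have hlo := hs.isLittleO.def hc0
  rw [Metric.eventually_nhds_iff] at hlo
  obtain ⟨δ, hδ, hlo⟩ := hlo
  refine ⟨δ / 3, by positivity, fun w hw => ?_⟩
  obtain ⟨χ, hχ, hχ1, hχ0, hχb, hχL⟩ := hM (δ / 3) (by positivity)
  set α := δ / 3 with hα
  have hαp : 0 < α := by positivity
  have hr : ∀ x y : F, ‖x‖ ≤ 2 * α → ‖y‖ ≤ 2 * α →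
      ‖g (w, x) - g (w, y) - L (x - y)‖ ≤ c * ‖x - y‖ := by
    intro x y hx hy
    have h := @hlo ((w, x), (w, y)) (by
      rw [dist_eq_norm]
      simp only [Prod.norm_def, Prod.fst_sub, Prod.snd_sub, Prod.fst_zero, Prod.snd_zero, sub_zero,
        max_lt_iff]
      refine ⟨⟨?_, ?_⟩, ?_, ?_⟩ <;> linarith)
    simpa [hL, Prod.norm_def] using h
  set r : F → H := fun z => g (w, z) - g (w, 0) - L z with hrdef
  have hrl : ∀ x y : F, ‖x‖ ≤ 2 * α → ‖y‖ ≤ 2 * α → ‖r x - r y‖ ≤ c * ‖x - y‖ := by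
    intro x y hx hy
    convert hr x y hx hy using 2
    simp only [hrdef, map_sub]
    abel
  have hr0 : r 0 = 0 := by simp [hrdef]
  have hrb : ∀ x : F, ‖x‖ ≤ 2 * α → ‖r x‖ ≤ c * (2 * α) := by
    intro x hx
    have := hrl x 0 hx (by simp; positivity)
    rw [hr0, sub_zero, sub_zero] at this
    exact this.trans (by gcongr)
  have hrc : ContDiff ℝ 1 r :=
    ((hg.comp (contDiff_prodMk_right w)).sub contDiff_const).sub L.contDiff
  -- key estimate, one variable in the ball
  have hsec : ∀ x y : F, ‖y‖ ≤ 2 * α → |χ x - χ y| * ‖r y‖ ≤ 2 * M * c * ‖x - y‖ := by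
    intro x y hy
    calc |χ x - χ y| * ‖r y‖ ≤ (M / α * ‖x - y‖) * (c * (2 * α)) := by
          gcongr
          · exact hχL x y
          · exact hrb y hy
      _ = _ := by field_simp
  have hpl : ∀ x y : F, ‖χ x • r x - χ y • r y‖ ≤ K * ‖x - y‖ := by
    intro x y
    rw [← hc]
    have hmc : 2 * M * c * ‖x - y‖ ≤ c * (1 + 2 * M) * ‖x - y‖ := by
      refine mul_le_mul_of_nonneg_right ?_ (norm_nonneg _)
      nlinarith
    rcases le_total (‖x‖) (2 * α) with hx | hx
    · rcases le_total (‖y‖) (2 * α) with hy | hy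
      · have e : χ x • r x - χ y • r y = χ x • (r x - r y) + (χ x - χ y) • r y := by
          rw [smul_sub (χ x) (r x) (r y), sub_smul (χ x) (χ y) (r y), sub_add_sub_cancel]
        rw [e]
        calc _ ≤ ‖χ x • (r x - r y)‖ + ‖(χ x - χ y) • r y‖ := norm_add_le _ _
          _ = |χ x| * ‖r x - r y‖ + |χ x - χ y| * ‖r y‖ := by
            rw [norm_smul, norm_smul, Real.norm_eq_abs, Real.norm_eq_abs]
          _ ≤ 1 * (c * ‖x - y‖) + 2 * M * c * ‖x - y‖ := by
            refine add_le_add ?_ (hsec x y hy)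
            exact mul_le_mul (hχb x) (hrl x y hx hy) (norm_nonneg _) zero_le_one
          _ = _ := by ring
      · have h := hsec y x hx
        rw [hχ0 y hy, zero_sub, abs_neg, norm_sub_rev y x] at h
        rw [hχ0 y hy, zero_smul, sub_zero, norm_smul, Real.norm_eq_abs]
        exact h.trans hmc
    · rw [hχ0 x hx, zero_smul, zero_sub, norm_neg]
      rcases le_total (‖y‖) (2 * α) with hy | hy
      · have h := hsec x y hy
        rw [hχ0 x hx, zero_sub, abs_neg] at h
        rw [norm_smul, Real.norm_eq_abs]
        exact h.trans hmc
      · rw [hχ0 y hy, zero_smul, norm_zero]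
        positivity
  let Φ : F → H := fun z => g (w, 0) + L z + χ z • r z
  have hΦ : ContDiff ℝ 1 Φ := (contDiff_const.add L.contDiff).add (hχ.smul hrc)
  have happ : ApproximatesLinearOn Φ (L : F →L[ℝ] H) univ K := by
    intro x _ y _
    convert hpl x y using 2
    simp only [Φ, ContinuousLinearEquiv.coe_coe, map_sub]
    abel
  obtain ⟨Ψ, h1, h2, h3⟩ := aux_global L Φ hΦ K hK happ
  refine ⟨Φ, Ψ, hΦ, h1, h2, h3, fun z hz => ?_⟩
  simp only [Φ, hχ1 z hz, hrdef, one_smul]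
  abel

/-- **Lemma 2.1.** Let `H`, `E` be finite-dimensional Euclidean spaces, `X ⊂ H`, `K ⊂ E`
compact sets containing the origins, and `S : H × E → H` a `C²` map with `S(0,0) = 0` and
`S(X × K) ⊂ X`, such that `D_η S(0,0) : E → H` is surjective and `D_u S(0,0) : H → H` is an
isomorphism.  Set `S₂(v; z₁, z₂) = S(S(v,z₁), z₂)`.  Then there are a subspace `F ⊂ E` with
`dim F = dim H` and a number `α > 0` such that, for any
`(v, z₁⁻, z₂) ∈ B̄_H(α) × B̄_{F^⊥}(α) × B̄_E(α)`, the `C¹`-smooth map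
`B_F(α) ∋ z₁⁺ ↦ S₂(v; z₁⁺ + z₁⁻, z₂)` is a diffeomorphism onto its image and can be extended
to a global diffeomorphism `Φ(·; v, z₁⁻, z₂)` from `F` onto `H`. -/
theorem local_diffeo_extension_for_S2
    {H E : Type*}
    [NormedAddCommGroup H] [InnerProductSpace ℝ H] [FiniteDimensional ℝ H]
    [NormedAddCommGroup E] [InnerProductSpace ℝ E] [FiniteDimensional ℝ E]
    (X : Set H) (K : Set E) (hX : IsCompact X) (hK : IsCompact K)
    (h0X : (0 : H) ∈ X) (h0K : (0 : E) ∈ K)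
    (S : H × E → H) (hS : ContDiff ℝ 2 S) (hS0 : S (0, 0) = 0)
    (hinv : ∀ u ∈ X, ∀ η ∈ K, S (u, η) ∈ X)
    (hsurj : Function.Surjective ((fderiv ℝ S (0, 0)).comp (ContinuousLinearMap.inr ℝ H E)))
    (hiso : Function.Bijective ((fderiv ℝ S (0, 0)).comp (ContinuousLinearMap.inl ℝ H E))) :
    ∃ (F : Submodule ℝ E) (α : ℝ), 0 < α ∧
      Module.finrank ℝ F = Module.finrank ℝ H ∧
      ∀ (v : H) (z₁m : E) (z₂ : E), ‖v‖ ≤ α → z₁m ∈ Fᗮ → ‖z₁m‖ ≤ α → ‖z₂‖ ≤ α →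
        -- the map `z₁⁺ ↦ S₂(v; z₁⁺ + z₁⁻, z₂)` is injective on `B_F(α)` …
        (Set.InjOn (fun z₁p : F => S (S (v, (z₁p : E) + z₁m), z₂)) (ball 0 α)) ∧
        -- … and extends to a global diffeomorphism `Φ : F → H`
        ∃ (Φ : F → H) (Ψ : H → F), ContDiff ℝ 1 Φ ∧ ContDiff ℝ 1 Ψ ∧
          Function.LeftInverse Ψ Φ ∧ Function.RightInverse Ψ Φ ∧
          ∀ z₁p : F, ‖z₁p‖ < α → Φ z₁p = S (S (v, (z₁p : E) + z₁m), z₂) := by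
  set A := (fderiv ℝ S (0, 0)).comp (ContinuousLinearMap.inl ℝ H E) with hA
  set B := (fderiv ℝ S (0, 0)).comp (ContinuousLinearMap.inr ℝ H E) with hB
  let N : Submodule ℝ E := LinearMap.ker (B : E →ₗ[ℝ] H)
  let F : Submodule ℝ E := Nᗮ
  have hinjF : Function.Injective ((B : E →ₗ[ℝ] H).comp F.subtype) := by
    rw [injective_iff_map_eq_zero]
    intro x hx
    have hxN : (x : E) ∈ N := hx
    have := Submodule.inner_right_of_mem_orthogonal hxN x.2
    exact Subtype.ext (inner_self_eq_zero.1 this)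
  have hfr : Module.finrank ℝ F = Module.finrank ℝ H := by
    have h1 := N.finrank_add_finrank_orthogonal
    have h2 := LinearMap.finrank_range_add_finrank_ker (B : E →ₗ[ℝ] H)
    have h3 : LinearMap.range (B : E →ₗ[ℝ] H) = ⊤ := LinearMap.range_eq_top.2 hsurj
    rw [h3, finrank_top] at h2
    change _ + Module.finrank ℝ N = _ at h2
    change Module.finrank ℝ Nᗮ = _
    omega
  have hinjL : Function.Injective ((A : H →ₗ[ℝ] H).comp ((B : E →ₗ[ℝ] H).comp F.subtype)) :=
    hiso.1.comp hinjF
  let L : F ≃L[ℝ] H :=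
    (LinearEquiv.ofInjectiveOfFinrankEq _ hinjL hfr).toContinuousLinearEquiv
  let g : (H × E × E) × F → H := fun p => S (S (p.1.1, (p.2 : E) + p.1.2.1), p.1.2.2)
  have hS1 : ContDiff ℝ 1 S := hS.of_le one_le_two
  have hg : ContDiff ℝ 1 g := by
    have hc : ContDiff ℝ 1 (fun p : (H × E × E) × F => (p.2 : E)) :=
      F.subtypeL.contDiff.comp contDiff_snd
    have h1 : ContDiff ℝ 1 (fun p : (H × E × E) × F => S (p.1.1, (p.2 : E) + p.1.2.1)) :=
      hS1.comp (by fun_prop)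
    exact hS1.comp (h1.prodMk (by fun_prop))
  have hL : ∀ x, fderiv ℝ g 0 (0, x) = L x := by
    intro x
    have hSd : HasFDerivAt S (fderiv ℝ S (0, 0)) (0, 0) :=
      (hS1.differentiable one_ne_zero _).hasFDerivAt
    have hgd : HasFDerivAt g (fderiv ℝ g 0) 0 :=
      (hg.differentiable one_ne_zero _).hasFDerivAt
    have h1 : HasFDerivAt (fun z : F => g (0, z))
        ((fderiv ℝ g 0).comp (ContinuousLinearMap.inr ℝ (H × E × E) F)) 0 :=
      HasFDerivAt.comp (g := g) (0 : F) hgd (hasFDerivAt_prodMk_right (0 : H × E × E) (0 : F))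
    have h2 : HasFDerivAt (fun z : F => S ((0 : H), (z : E))) (B.comp F.subtypeL) 0 := by
      have hz : HasFDerivAt (fun z : F => ((0 : H), (z : E)))
          ((ContinuousLinearMap.inr ℝ H E).comp F.subtypeL) 0 :=
        ((ContinuousLinearMap.inr ℝ H E).comp F.subtypeL).hasFDerivAt
      exact HasFDerivAt.comp (g := S) (0 : F) hSd hz
    have h3 : HasFDerivAt (fun z : F => S (S ((0 : H), (z : E)), (0 : E)))
        (A.comp (B.comp F.subtypeL)) 0 := by
      have hA' : HasFDerivAt (fun u : H => S (u, (0 : E))) A (0 : H) :=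
        HasFDerivAt.comp (g := S) (0 : H) hSd (hasFDerivAt_prodMk_left (0 : H) (0 : E))
      have h0 : S ((0 : H), ((0 : F) : E)) = 0 := hS0
      exact HasFDerivAt.comp (g := fun u : H => S (u, (0 : E))) (0 : F) (by rw [h0]; exact hA') h2
    have h4 : (fun z : F => g (0, z)) = fun z : F => S (S ((0 : H), (z : E)), (0 : E)) := by
      funext z
      simp [g]
    rw [h4] at h1
    have h5 := DFunLike.congr_fun (h1.unique h3) x
    exact h5
  obtain ⟨α, hα, hmain⟩ := aux_ext g hg L hL
  refine ⟨F, α, hα, hfr, fun v z₁m z₂ hv _ hz1 hz2 => ?_⟩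
  obtain ⟨Φ, Ψ, h1, h2, h3, h4, h5⟩ := hmain (v, z₁m, z₂) (by
    simp only [Prod.norm_def, max_le_iff]
    exact ⟨hv, hz1, hz2⟩)
  refine ⟨?_, Φ, Ψ, h1, h2, h3, h4, h5⟩
  intro x hx y hy hxy
  rw [mem_ball_zero_iff] at hx hy
  apply h3.injective
  rw [h5 x hx, h5 y hy]
  exact hxy
end

section
/- Let H and E be finite-dimensional Euclidean spaces, X ⊂ H and K ⊂ E compact subsets containing the origins, and S: H × E → H a C²-smooth map with S(0,0) = 0 and S(X × K) ⊂ X, satisfying the Controllability hypothesis: D_η S(0,0): E → H is surjective and D_u S(0,0): H → H is an isomorphism. Let Q(y;·) be a Feller transition probability on E with supp Q(y;·) ⊂ K for y ∈ K, satisfying the Minorisation hypothesis: there exist r > 0 and a bounded continuous ρ: B̄_E(r) × E → ℝ₊ with ρ(0,0) > 0 such that Q(y; dz) ≥ ρ(y,z) ℓ(dz) for y ∈ K ∩ B̄_E(r). Let 𝒫₂ be the time-2 transition probability of the Markov process U_k = (S(v_{k−1}, ζ_k), ζ_k) on 𝔛 = X × K, where {ζ_k} is a Markov process with transition probability Q.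 Then there exist a nonzero non-negative Borel measure λ on 𝔛 and a number δ > 0 such that 𝒫₂(U;·) ≥ λ for all U ∈ B̄_𝔛(0, δ); consequently ‖𝒫₂(U₁;·) − 𝒫₂(U₂;·)‖_var ≤ 1 − λ(𝔛) for all U₁, U₂ ∈ B̄_𝔛(0, δ). -/
open MeasureTheory ProbabilityTheory Set Metric

/-- The time-1 transition probability `𝒫(U;·) = 𝒮_*((v,ξ), Q(ξ;·))` of the Markov process
`U_k = (S(v_{k-1}, ζ_k), ζ_k)` on the extended phase space. -/
noncomputable def Pstep {H E : Type*} [MeasurableSpace H] [MeasurableSpace E]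
    (S : H × E → H) (Q : Kernel E E) (U : H × E) : Measure (H × E) :=
  (Q U.2).map fun z => (S (U.1, z), z)

/-- The time-`m` transition probability of the Markov process on the extended phase space. -/
noncomputable def Piter {H E : Type*} [MeasurableSpace H] [MeasurableSpace E]
    (S : H × E → H) (Q : Kernel E E) : ℕ → H × E → Measure (H × E)
  | 0, U => Measure.dirac U
  | m + 1, U => (Pstep S Q U).bind (Piter S Q m)

open scoped NNReal ENNReal


theorem cp_push {H : Type*} [NormedAddCommGroup H] [NormedSpace ℝ H] [FiniteDimensional ℝ H]
    [MeasurableSpace H] [BorelSpace H] (μ : Measure H) [μ.IsAddHaarMeasure] :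
    ∃ d : ℝ≥0, 0 < d ∧ ∀ (s : ℝ) (f : H → H), 0 ≤ s →
      ApproximatesLinearOn f (ContinuousLinearMap.id ℝ H) (closedBall 0 s) d →
      ‖f 0‖ ≤ s / 4 → ∀ A : Set H,
        μ (A ∩ closedBall 0 (s/4)) ≤ 2 * μ (f ⁻¹' A ∩ closedBall 0 s) := by
  have h1 := addHaar_image_le_mul_of_det_lt μ (ContinuousLinearMap.id ℝ H) (m := 2)
    (by simp [ContinuousLinearMap.det])
  obtain ⟨d, hd, hd0⟩ := (h1.and self_mem_nhdsWithin).exists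
  obtain ⟨d, hd, hd0, hd2⟩ : ∃ d : ℝ≥0, (∀ (s : Set H) (f : H → H),
      ApproximatesLinearOn f (ContinuousLinearMap.id ℝ H) s d → μ (f '' s) ≤ (2:ℝ≥0) * μ s) ∧ 0 < d ∧
      d ≤ 1/2 := by
    refine ⟨min d (1/2), fun s f h => hd s f (h.mono_num (min_le_left _ _)), ?_, min_le_right _ _⟩
    exact lt_min hd0 (by norm_num)
  refine ⟨d, hd0, fun s f hs hf hf0 A => ?_⟩
  let R : ContinuousLinearMap.NonlinearRightInverse (ContinuousLinearMap.id ℝ H) :=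
    { toFun := id, nnnorm := 1, bound' := by intro y; simp, right_inv' := by intro y; simp }
  have hsurj := hf.surjOn_closedBall_of_nonlinearRightInverse R hs (subset_refl _)
  have hsub : closedBall (0:H) (s/4) ⊆ closedBall (f 0) (((R.nnnorm:ℝ)⁻¹ - d) * s) := by
    apply closedBall_subset_closedBall'
    have hd2' : (d:ℝ) ≤ 1/2 := by exact_mod_cast hd2
    have : (R.nnnorm:ℝ) = 1 := rfl
    rw [this, dist_zero_left]
    nlinarith
  have := hd _ f (hf.mono_set (inter_subset_right (s := f ⁻¹' A)))
  refine le_trans (measure_mono ?_) this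
  rintro y ⟨hyA, hy⟩
  obtain ⟨x, hx, rfl⟩ := hsurj (hsub hy)
  exact ⟨x, ⟨hyA, hx⟩, rfl⟩

theorem cp_avg {H E : Type*} [NormedAddCommGroup H] [NormedSpace ℝ H] [FiniteDimensional ℝ H]
    [MeasurableSpace H] [BorelSpace H] (μ : Measure H) [μ.IsAddHaarMeasure]
    [NormedAddCommGroup E] [NormedSpace ℝ E] [FiniteDimensional ℝ E]
    [MeasurableSpace E] [BorelSpace E] (ν : Measure E) [ν.IsAddHaarMeasure]
    (R : H →L[ℝ] E) (a b s : ℝ) (hab : b + ‖R‖ * s ≤ a) (F : E → ℝ≥0∞) (hF : Measurable F) :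
    ∫⁻ z in closedBall 0 b, ∫⁻ h in closedBall 0 s, F (z + R h) ∂μ ∂ν
      ≤ μ (closedBall 0 s) * ∫⁻ z in closedBall 0 a, F z ∂ν := by
  rw [lintegral_lintegral_swap (by fun_prop)]
  calc _ ≤ ∫⁻ h in closedBall 0 s, (∫⁻ z in closedBall 0 a, F z ∂ν) ∂μ := by
        refine setLIntegral_mono' measurableSet_closedBall fun h hh => ?_
        rw [← lintegral_indicator measurableSet_closedBall,
          ← lintegral_indicator measurableSet_closedBall,
          ← lintegral_add_right_eq_self ((closedBall 0 a).indicator F) (R h)]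
        refine lintegral_mono fun z => ?_
        by_cases hz : z ∈ closedBall (0:E) b
        swap
        · rw [indicator_of_notMem hz]; exact zero_le
        rw [indicator_of_mem hz, indicator_of_mem]
        simp only [mem_closedBall, dist_zero_right] at *
        calc _ ≤ ‖z‖ + ‖R h‖ := norm_add_le _ _
          _ ≤ b + ‖R‖ * s := by
            gcongr
            exact (R.le_opNorm h).trans (by gcongr)
          _ ≤ a := hab
    _ = _ := by simp [mul_comm]

/-- key geometric lemma -/
theorem cp_geo {H E : Type*} [NormedAddCommGroup H] [NormedSpace ℝ H] [FiniteDimensional ℝ H]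
    [MeasurableSpace H] [BorelSpace H] (μ : Measure H) [μ.IsAddHaarMeasure]
    [NormedAddCommGroup E] [NormedSpace ℝ E] [FiniteDimensional ℝ E]
    [MeasurableSpace E] [BorelSpace E] (ν : Measure E) [ν.IsAddHaarMeasure]
    (G : (H × E) × E → H) (hG : Measurable G) (G' : (H × E) × E →L[ℝ] H)
    (hG' : HasStrictFDerivAt G G' 0) (hG0 : G 0 = 0)
    (hsurj : Function.Surjective (G'.comp (ContinuousLinearMap.inr ℝ (H × E) E)))
    (a : ℝ) (ha : 0 < a) :
    ∃ b t : ℝ, 0 < b ∧ b ≤ a ∧ 0 < t ∧ ∃ κ : ℝ≥0∞, κ ≠ 0 ∧ κ ≠ ∞ ∧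
      ∀ p : H × E, ‖p‖ ≤ b → ∀ A : Set H, MeasurableSet A →
        κ * μ (A ∩ closedBall 0 t) ≤ ∫⁻ z in closedBall 0 a, A.indicator 1 (G (p, z)) ∂ν := by
  obtain ⟨d, hd0, hd⟩ := cp_push μ
  obtain ⟨R, hR⟩ := (G'.comp (ContinuousLinearMap.inr ℝ (H × E) E)).toLinearMap.exists_rightInverse_of_surjective
    (LinearMap.range_eq_top.2 hsurj)
  obtain ⟨R, hR⟩ : ∃ R : H →L[ℝ] E, ∀ h, G' ((0, R h)) = h := by
    refine ⟨R.toContinuousLinearMap, fun h => ?_⟩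
    have := LinearMap.congr_fun hR h
    simpa using this
  have hc : 0 < (d:ℝ) / (‖R‖ + 1) := by positivity
  obtain ⟨ε, hε, hεG⟩ : ∃ ε > 0, ∀ x y, ‖x‖ < ε → ‖y‖ < ε →
      ‖G x - G y - G' (x - y)‖ ≤ (d:ℝ) / (‖R‖ + 1) * ‖x - y‖ := by
    have := hG'.isLittleO.def hc
    rw [Metric.eventually_nhds_iff] at this
    obtain ⟨ε, hε, h⟩ := this
    refine ⟨ε, hε, fun x y hx hy => h (y := (x, y)) ?_⟩
    simp [Prod.dist_eq, hx, hy]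
  set e := min ε a with he
  have he0 : 0 < e := lt_min hε ha
  obtain ⟨s, hs0, hs⟩ : ∃ s > 0, ‖R‖ * s < e / 2 := by
    refine ⟨e / 2 / (‖R‖ + 1), by positivity, ?_⟩
    rw [mul_div_assoc', div_lt_iff₀ (by positivity)]
    nlinarith
  obtain ⟨b, hb0, hbe, hb⟩ : ∃ b > 0, b ≤ e / 2 ∧ ∀ p, ‖p‖ ≤ b → ‖G p‖ ≤ s / 4 := by
    have := hG'.continuousAt.norm.eventually_lt_const (u := s/4) (by show ‖G 0‖ < s / 4; rw [hG0, norm_zero]; positivity)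
    rw [Metric.eventually_nhds_iff] at this
    obtain ⟨η, hη, h⟩ := this
    refine ⟨min (η / 2) (e / 2), by positivity, min_le_right _ _, fun p hp => (h ?_).le⟩
    rw [dist_zero_right]
    exact hp.trans_lt ((min_le_left _ _).trans_lt (by linarith))
  have hea : e ≤ a := min_le_right _ _
  have heε : e ≤ ε := min_le_left _ _
  have hμs0 : μ (closedBall 0 s) ≠ 0 := (measure_closedBall_pos μ _ hs0).ne'
  have hμs1 : μ (closedBall 0 s) ≠ ∞ := measure_closedBall_lt_top.ne
  have hνb0 : ν (closedBall 0 b) ≠ 0 := (measure_closedBall_pos ν _ hb0).ne'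
  have hνb1 : ν (closedBall 0 b) ≠ ∞ := measure_closedBall_lt_top.ne
  refine ⟨b, s / 4, hb0, by linarith, by positivity,
    ν (closedBall 0 b) / (2 * μ (closedBall 0 s)), ?_, ?_, fun p hp A hA => ?_⟩
  · exact (ENNReal.div_pos hνb0 (ENNReal.mul_ne_top (by simp) hμs1)).ne'
  · exact ENNReal.div_ne_top hνb1 (mul_ne_zero (by simp) hμs0)
  have havg := cp_avg μ ν R a b s (by linarith) (fun z => A.indicator 1 (G (p, z)))
    ((measurable_one.indicator hA).comp (hG.comp (by fun_prop)))
  have hlow : ν (closedBall 0 b) * (μ (A ∩ closedBall 0 (s/4)) / 2) ≤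
    ∫⁻ z in closedBall 0 b, ∫⁻ h in closedBall 0 s, A.indicator 1 (G (p, z + R h)) ∂μ ∂ν := by
    calc _ = ∫⁻ z in closedBall 0 b, (μ (A ∩ closedBall 0 (s/4)) / 2) ∂ν := by simp [mul_comm]
      _ ≤ _ := by
        refine setLIntegral_mono' measurableSet_closedBall fun z hz => ?_
        have hz' : ‖z‖ ≤ b := by simpa using hz
        have hb' : ∀ h ∈ closedBall (0:H) s, ‖(p, z + R h)‖ < ε := by
          intro h hh
          have hh' : ‖h‖ ≤ s := by simpa using hh
          have : ‖z + R h‖ ≤ b + ‖R‖ * s :=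
            (norm_add_le _ _).trans (add_le_add hz' ((R.le_opNorm h).trans (by gcongr)))
          rw [Prod.norm_def]
          exact max_lt (by show ‖p‖ < ε; linarith) (by show ‖z + R h‖ < ε; linarith)
        have := hd s (fun h => G (p, z + R h)) hs0.le ?_ ?_ A
        · have hm : MeasurableSet ((fun h => G (p, z + R h)) ⁻¹' A) :=
            (hG.comp (by fun_prop)) hA
          have h2 : ∫⁻ h in closedBall 0 s, A.indicator 1 (G (p, z + R h)) ∂μ
            = μ ((fun h => G (p, z + R h)) ⁻¹' A ∩ closedBall 0 s) := by
            rw [← Measure.restrict_apply hm, ← lintegral_indicator_one hm]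
            rfl
          rw [h2]
          exact ENNReal.div_le_of_le_mul' this
        · intro x hx y hy
          have h3 := hεG (p, z + R x) (p, z + R y) (hb' x hx) (hb' y hy)
          have h4 : ((p, z + R x) - (p, z + R y) : (H × E) × E) = (0, R (x - y)) := by
            simp
          rw [h4, hR] at h3
          refine h3.trans ?_
          rw [Prod.norm_mk, norm_zero, max_eq_right (norm_nonneg _)]
          calc (d:ℝ) / (‖R‖ + 1) * ‖R (x - y)‖ ≤ (d:ℝ) / (‖R‖ + 1) * ((‖R‖ + 1) * ‖x - y‖) := by
                gcongr
                refine (R.le_opNorm _).trans ?_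
                gcongr
                linarith
            _ = d * ‖x - y‖ := by field_simp
        · apply hb
          rw [map_zero, add_zero, Prod.norm_def]
          exact max_le hp hz'
  have h5 := hlow.trans havg
  calc _ = (ν (closedBall 0 b) * (μ (A ∩ closedBall 0 (s/4)) / 2)) / μ (closedBall 0 s) := by
        simp only [div_eq_mul_inv]
        rw [ENNReal.mul_inv (by simp) (by simp)]
        ring
    _ ≤ _ := ENNReal.div_le_of_le_mul' h5

theorem cp_Pstep_meas {H E : Type*} [MeasurableSpace H] [MeasurableSpace E]
    (S : H × E → H) (hS : Measurable S) (Q : Kernel E E) [IsMarkovKernel Q] :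
    Measurable (Pstep S Q) := by
  have : Pstep S Q = fun U => (((Kernel.id ×ₖ (Q.comap Prod.snd measurable_snd)).map
      (fun p : (H × E) × E => (S (p.1.1, p.2), p.2))) : Kernel (H × E) (H × E)) U := by
    funext U
    have hm : Measurable (fun p : (H × E) × E => (S (p.1.1, p.2), p.2)) :=
      (hS.comp (by fun_prop)).prodMk measurable_snd
    rw [Kernel.map_apply _ hm, Kernel.prod_apply, Kernel.id_apply, Measure.dirac_prod,
      Measure.map_map hm (by fun_prop)]
    rfl
  rw [this]
  exact Kernel.measurable _

theorem cp_Piter_two {H E : Type*} [MeasurableSpace H] [MeasurableSpace E]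
    (S : H × E → H) (hS : Measurable S) (Q : Kernel E E) [IsMarkovKernel Q] (U : H × E)
    (Γ : Set (H × E)) (hΓ : MeasurableSet Γ) :
    Piter S Q 2 U Γ = ∫⁻ y, ∫⁻ z, Γ.indicator 1 (S (S (U.1, y), z), z) ∂(Q y) ∂(Q U.2) := by
  have h1 : Piter S Q 1 = Pstep S Q := by
    funext V
    show (Pstep S Q V).bind (Piter S Q 0) = _
    have : Piter S Q 0 = Measure.dirac := rfl
    rw [this, Measure.bind_dirac]
  have h2 : Piter S Q 2 U = (Pstep S Q U).bind (Piter S Q 1) := rfl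
  have hm := cp_Pstep_meas S hS Q
  have hmm : ∀ u : H, Measurable fun z => (S (u, z), z) := fun u =>
    (hS.comp (by fun_prop)).prodMk measurable_id
  rw [h2, h1, Measure.bind_apply hΓ hm.aemeasurable]
  conv_lhs => rw [Pstep]
  rw [lintegral_map (f := fun V => Pstep S Q V Γ) ((Measure.measurable_coe hΓ).comp hm) (hmm _)]
  refine lintegral_congr fun y => ?_
  rw [Pstep, ← lintegral_indicator_one hΓ, lintegral_map (measurable_one.indicator hΓ) (hmm _)]

theorem cp_prob {H E : Type*} [MeasurableSpace H] [MeasurableSpace E]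
    (S : H × E → H) (hS : Measurable S) (Q : Kernel E E) [IsMarkovKernel Q] (U : H × E) :
    IsProbabilityMeasure (Piter S Q 2 U) := by
  constructor
  rw [cp_Piter_two S hS Q U _ MeasurableSet.univ]
  simp

theorem cp_tv {α : Type*} [MeasurableSpace α] (P P' l : Measure α) [IsProbabilityMeasure P]
    [IsProbabilityMeasure P']
    (h : ∀ A, MeasurableSet A → l A ≤ P A) (h' : ∀ A, MeasurableSet A → l A ≤ P' A)
    (A : Set α) (hA : MeasurableSet A) (B : Set α) :
    (P A).toReal - (P' A).toReal ≤ 1 - (l B).toReal := by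
  have hfin : IsFiniteMeasure l := ⟨(h _ MeasurableSet.univ).trans_lt (by simp)⟩
  have e1 : P.real A + P.real Aᶜ = 1 := by
    rw [measureReal_add_measureReal_compl hA]; simp
  have e2 : l.real A + l.real Aᶜ = l.real univ := measureReal_add_measureReal_compl hA
  have e3 : l.real B ≤ l.real univ := measureReal_mono (subset_univ _)
  have e4 : l.real A ≤ P'.real A := ENNReal.toReal_mono (by simp) (h' A hA)
  have e5 : l.real Aᶜ ≤ P.real Aᶜ := ENNReal.toReal_mono (by simp) (h _ hA.compl)
  simp only [Measure.real] at *
  linarith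

/-- **Coupling property (Cou) / minorisation of the two-step transition probability.**  Under
the Controllability hypothesis on `S` and the Minorisation hypothesis on `Q`, there exist a
nonzero non-negative measure `λ` on `𝔛 = X × K` and a number `δ > 0` such that
`𝒫₂(U;·) ≥ λ` for all `U ∈ B̄_𝔛(0,δ)`; consequently
`‖𝒫₂(U₁;·) − 𝒫₂(U₂;·)‖_var ≤ 1 − λ(𝔛)` for all `U₁, U₂ ∈ B̄_𝔛(0,δ)`. -/
theorem coupling_property
    {H E : Type*}
    [NormedAddCommGroup H] [InnerProductSpace ℝ H] [FiniteDimensional ℝ H]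
    [MeasurableSpace H] [BorelSpace H]
    [NormedAddCommGroup E] [InnerProductSpace ℝ E] [FiniteDimensional ℝ E]
    [MeasureSpace E] [BorelSpace E] [(volume : Measure E).IsAddHaarMeasure]
    (X : Set H) (K : Set E) (hX : IsCompact X) (hK : IsCompact K)
    (h0X : (0 : H) ∈ X) (h0K : (0 : E) ∈ K)
    (S : H × E → H) (hS : ContDiff ℝ 2 S) (hS0 : S (0, 0) = 0)
    (hinv : ∀ u ∈ X, ∀ η ∈ K, S (u, η) ∈ X)
    -- Controllability
    (hsurj : Function.Surjective ((fderiv ℝ S (0, 0)).comp (ContinuousLinearMap.inr ℝ H E)))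
    (hiso : Function.Bijective ((fderiv ℝ S (0, 0)).comp (ContinuousLinearMap.inl ℝ H E)))
    -- the transition probability Q
    (Q : Kernel E E) [IsMarkovKernel Q]
    (hFeller : ∀ f : BoundedContinuousFunction E ℝ, Continuous fun y => ∫ z, f z ∂(Q y))
    (hsuppQ : ∀ y ∈ K, Q y Kᶜ = 0)
    -- Minorisation
    (hminor : ∃ r > 0, ∃ ρ : E → E → ℝ,
      (∀ y z, 0 ≤ ρ y z) ∧ (∃ Cb : ℝ, ∀ y z, ρ y z ≤ Cb) ∧
      ContinuousOn (fun p : E × E => ρ p.1 p.2) (closedBall 0 r ×ˢ univ) ∧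
      0 < ρ 0 0 ∧
      ∀ y ∈ K ∩ closedBall 0 r, ∀ A : Set E, MeasurableSet A →
        ∫⁻ z in A, ENNReal.ofReal (ρ y z) ≤ Q y A) :
    ∃ (lam : Measure (H × E)) (δ : ℝ), lam ≠ 0 ∧ 0 < δ ∧
      (∀ U ∈ closedBall (0 : H × E) δ ∩ X ×ˢ K,
        ∀ Γ : Set (H × E), MeasurableSet Γ → lam Γ ≤ Piter S Q 2 U Γ) ∧
      (∀ U₁ ∈ closedBall (0 : H × E) δ ∩ X ×ˢ K,
        ∀ U₂ ∈ closedBall (0 : H × E) δ ∩ X ×ˢ K,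
        ∀ Γ : Set (H × E), MeasurableSet Γ →
          |(Piter S Q 2 U₁ Γ).toReal - (Piter S Q 2 U₂ Γ).toReal|
            ≤ 1 - (lam (X ×ˢ K)).toReal) := by
  have hSm : Measurable S := hS.continuous.measurable
  obtain ⟨r, hr, ρ, hρ0, -, hρc, hρ00, hmin⟩ := hminor
  set c := ρ 0 0 / 2 with hc
  have hc0 : 0 < c := by positivity
  -- local lower bound on the density
  obtain ⟨a, ha0, har, haρ⟩ : ∃ a > 0, a ≤ r ∧ ∀ y z, ‖y‖ ≤ a → ‖z‖ ≤ a → c ≤ ρ y z := by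
    have hcont : ContinuousAt (fun p : E × E => ρ p.1 p.2) (0, 0) :=
      hρc.continuousAt (prod_mem_nhds (closedBall_mem_nhds _ hr) Filter.univ_mem)
    have := hcont.eventually_const_lt (u := c) (by show c < ρ 0 0; linarith)
    rw [Metric.eventually_nhds_iff] at this
    obtain ⟨η, hη, h⟩ := this
    refine ⟨min (η / 2) r, by positivity, min_le_right _ _, fun y z hy hz => ?_⟩
    refine (h (y := (y, z)) ?_).le
    have : min (η / 2) r < η := (min_le_left _ _).trans_lt (by linarith)
    rw [Prod.dist_eq]
    simp only [dist_zero_right]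
    exact max_lt (hy.trans_lt this) (hz.trans_lt this)
  have hQ : ∀ y ∈ K, ‖y‖ ≤ a →
      ENNReal.ofReal c • (volume.restrict (closedBall (0:E) a)) ≤ Q y := by
    intro y hyK hya
    refine Measure.le_iff.2 fun A hA => ?_
    refine le_trans ?_ (hmin y ⟨hyK, by simpa using hya.trans har⟩ A hA)
    rw [Measure.smul_apply, Measure.restrict_apply hA, smul_eq_mul]
    calc _ = ∫⁻ z in A ∩ closedBall 0 a, ENNReal.ofReal c := by simp
      _ ≤ ∫⁻ z in A ∩ closedBall 0 a, ENNReal.ofReal (ρ y z) := by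
        refine setLIntegral_mono' (hA.inter measurableSet_closedBall) fun z hz => ?_
        exact ENNReal.ofReal_le_ofReal (haρ y z hya (by simpa using hz.2))
      _ ≤ _ := lintegral_mono_set inter_subset_left
  have hcE : ENNReal.ofReal c ≠ 0 := by simpa using hc0
  have hQl : ∀ y ∈ K, ‖y‖ ≤ a → ∀ f : E → ℝ≥0∞,
      ENNReal.ofReal c * ∫⁻ z in closedBall 0 a, f z ≤ ∫⁻ z, f z ∂(Q y) := by
    intro y hyK hya f
    rw [← smul_eq_mul, ← lintegral_smul_measure]
    exact lintegral_mono' (hQ y hyK hya) le_rfl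
  have hKae : ∀ᵐ z ∂(volume.restrict (closedBall (0:E) a)), z ∈ K := by
    have := (hQ 0 h0K (by simpa using ha0.le)) Kᶜ
    rw [hsuppQ 0 h0K, Measure.smul_apply, smul_eq_mul, nonpos_iff_eq_zero, mul_eq_zero] at this
    exact this.resolve_left hcE
  -- the two-step map
  let μ : Measure H := Measure.addHaar
  let G : (H × E) × E → H := fun p => S (S (p.1.1, p.2), p.1.2)
  have hSd : HasStrictFDerivAt S (fderiv ℝ S (0, 0)) (0, 0) :=
    hS.contDiffAt.hasStrictFDerivAt (by norm_num)
  set D := fderiv ℝ S (0, 0) with hD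
  let inner : (H × E) × E →L[ℝ] H × E :=
    ((ContinuousLinearMap.fst ℝ H E).comp (ContinuousLinearMap.fst ℝ (H × E) E)).prod
      (ContinuousLinearMap.snd ℝ (H × E) E)
  let oth : (H × E) × E →L[ℝ] E :=
    (ContinuousLinearMap.snd ℝ H E).comp (ContinuousLinearMap.fst ℝ (H × E) E)
  have hG' : HasStrictFDerivAt G (D.comp ((D.comp inner).prod oth)) 0 := by
    have h1 : HasStrictFDerivAt (fun p => S (inner p)) (D.comp inner) 0 :=
      HasStrictFDerivAt.comp (g := S) (f := inner) 0 (by rw [map_zero]; exact hSd)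
        inner.hasStrictFDerivAt
    have h2 := h1.prodMk (oth.hasStrictFDerivAt (x := 0))
    refine HasStrictFDerivAt.comp (g := S) (f := fun p => (S (inner p), oth p)) 0 ?_ h2
    have : (S (inner 0), oth 0) = ((0, 0) : H × E) := by
      rw [map_zero, map_zero]
      exact Prod.ext hS0 rfl
    rw [this]
    exact hSd
  have hG0 : G 0 = 0 := by
    show S (S (0, 0), 0) = 0
    rw [hS0, hS0]
  have hGm : Measurable G := by
    refine hSm.comp (Measurable.prodMk (hSm.comp (by fun_prop)) (by fun_prop))
  have hsurjG : Function.Surjective ((D.comp ((D.comp inner).prod oth)).comp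
      (ContinuousLinearMap.inr ℝ (H × E) E)) := by
    intro h
    obtain ⟨u, hu⟩ := hiso.2 h
    obtain ⟨z, hz⟩ := hsurj u
    refine ⟨z, ?_⟩
    rw [← hu, ← hz]
    rfl
  obtain ⟨b, t, hb0, hba, ht0, κ, hκ0, hκ1, hκ⟩ :=
    cp_geo μ volume G hGm _ hG' hG0 hsurjG a ha0
  let C := ENNReal.ofReal c * ENNReal.ofReal c * κ
  let lam : Measure (H × E) :=
    C • ((μ.restrict (closedBall 0 t)).prod (volume.restrict (closedBall (0:E) b)))
  have main : ∀ U ∈ closedBall (0 : H × E) b ∩ X ×ˢ K,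
        ∀ Γ : Set (H × E), MeasurableSet Γ → lam Γ ≤ Piter S Q 2 U Γ := by
    rintro ⟨v, ξ⟩ ⟨hU, hUX⟩ Γ hΓ
    rw [mem_closedBall, dist_zero_right, Prod.norm_def] at hU
    have hv : ‖v‖ ≤ b := (le_max_left _ _).trans hU
    have hξ : ‖ξ‖ ≤ b := (le_max_right _ _).trans hU
    rw [cp_Piter_two S hSm Q _ Γ hΓ]
    have hind : Measurable (Γ.indicator (1 : H × E → ℝ≥0∞)) := measurable_one.indicator hΓ
    calc lam Γ = ENNReal.ofReal c * ENNReal.ofReal c * (∫⁻ z in closedBall (0:E) b,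
          κ * μ ((fun x => (x, z)) ⁻¹' Γ ∩ closedBall 0 t)) := by
          have hms : ∀ z : E, MeasurableSet ((fun x : H => (x, z)) ⁻¹' Γ) := fun z =>
            measurable_prodMk_right hΓ
          rw [lintegral_const_mul' _ _ hκ1, Measure.smul_apply, Measure.prod_apply_symm hΓ,
            smul_eq_mul, mul_assoc _ κ]
          simp only [Measure.restrict_apply (hms _)]
      _ ≤ ENNReal.ofReal c * ENNReal.ofReal c * (∫⁻ z in closedBall (0:E) b,
          ∫⁻ y in closedBall 0 a, Γ.indicator 1 (S (S (v, y), z), z)) := by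
          refine mul_le_mul_right (setLIntegral_mono' measurableSet_closedBall fun z hz => ?_) _
          refine hκ (v, z) ?_ _ (measurable_prodMk_right hΓ)
          exact max_le hv (by simpa using hz)
      _ ≤ ENNReal.ofReal c * ENNReal.ofReal c * (∫⁻ z in closedBall (0:E) a,
          ∫⁻ y in closedBall 0 a, Γ.indicator 1 (S (S (v, y), z), z)) :=
          mul_le_mul_right (lintegral_mono_set (closedBall_subset_closedBall hba)) _
      _ = ENNReal.ofReal c * (∫⁻ y in closedBall (0:E) a,
          ENNReal.ofReal c * ∫⁻ z in closedBall 0 a, Γ.indicator 1 (S (S (v, y), z), z)) := by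
          rw [lintegral_const_mul' _ _ ENNReal.ofReal_ne_top, mul_assoc, lintegral_lintegral_swap]
          refine (hind.comp (Measurable.prodMk (hSm.comp (Measurable.prodMk
            (hSm.comp ?_) ?_)) ?_)).aemeasurable <;> fun_prop
      _ ≤ ENNReal.ofReal c * (∫⁻ y in closedBall (0:E) a,
          ∫⁻ z, Γ.indicator 1 (S (S (v, y), z), z) ∂(Q y)) := by
          refine mul_le_mul_right (lintegral_mono_ae ?_) _
          filter_upwards [hKae, ae_restrict_mem measurableSet_closedBall] with y hy hya
          exact hQl y hy (by simpa using hya) _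
      _ ≤ _ := hQl ξ hUX.2 (hξ.trans hba) _
  refine ⟨lam, b, ?_, hb0, main, ?_⟩
  · intro h0
    have := congrArg (fun m : Measure (H × E) => m univ) h0
    have h1 : μ (closedBall 0 t) ≠ 0 := (measure_closedBall_pos μ _ ht0).ne'
    have h2 : (volume : Measure E) (closedBall 0 b) ≠ 0 :=
      (measure_closedBall_pos volume _ hb0).ne'
    simp only [lam, C, Measure.smul_apply, ← univ_prod_univ, Measure.prod_prod,
      Measure.restrict_apply MeasurableSet.univ, univ_inter, smul_eq_mul, Measure.coe_zero,
      Pi.zero_apply, mul_eq_zero, hcE, hκ0, h1, h2, or_self] at this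
  · intro U₁ h₁ U₂ h₂ Γ hΓ
    have := cp_prob S hSm Q U₁
    have := cp_prob S hSm Q U₂
    rw [abs_le]
    have e1 := cp_tv _ _ lam (main U₁ h₁) (main U₂ h₂) Γ hΓ (X ×ˢ K)
    have e2 := cp_tv _ _ lam (main U₂ h₂) (main U₁ h₁) Γ hΓ (X ×ˢ K)
    constructor <;> linarith
end
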